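/- For every continuous compactly supported function f : [0,∞) → ℝ, one has (1/(2π))·∫_0^{2π} f(ε·τ̃_ε(ω)) dω → ∫_0^∞ f(t)·h(t) dt as ε → 0⁺, where h(t) = 2/ζ(2) for 0 < t ≤ 1/2, h(t) = (2/ζ(2))·ψ(t) for 1/2 ≤ t ≤ 1, and h(t) = 0 for t ≥ 1. That is, the probability measures μ̃_ε given by μ̃_ε(f) = (1/(2π))∫_0^{2π} f(ε·τ̃_ε(ω)) dω converge weakly to the measure with density h. -/

import Mathlib

/-! By the eightfold symmetry of the lattice it suffices to treat directions `ω ∈ [0, π/4]`, described by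
`θ = tan ω`. There the free path differs by at most `2 ε` from `sec θ * D(θ, ε sec θ)`, where `D(θ, δ)`
is the least `n ≥ 1` such that `n θ` lies within `δ` of an integer (`abs_freePath_sub_le`).

For fixed `δ`, the set of `θ` near `b / n` with `D(θ, δ) = n` is, up to end points, an interval of
length `(δ / n) G(δ n, b⁻¹ / n)`, with `b⁻¹` the inverse of `b` modulo `n` (`hitSet_interval`). Hence
the integral of `e(mθ) f(δ D(θ, δ))` is, up to `O(δ)`, the arithmetic sum `Lam` over coprime pairs
`(n, b)`. Its limit is governed by the joint equidistribution of `δ n`, `b⁻¹ / n` and `b / n`, which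
needs two inputs: the mean value `1 / ζ(2)` of `φ(n) / n` (`tendsto_totient_sum`), and the bound `o(n)`
for the Kloosterman sums modulo `n` (`kl_tendsto`). The latter is elementary: the fourth moment of the
Kloosterman sum over all parameters counts solutions of a pair of equations in units, and the sum is
constant along orbits of the unit group (`kloo_fourth`). The density `hdens` appears because
`∫₀¹ G(t, y) dy = ζ(2) h(t)` (`integral_G`).

Density of trigonometric polynomials in `L¹` upgrades the convergence of the twisted moments to weak
convergence on every window of directions (`tendsto_DD_window`). Since `D(θ, δ)` is monotone in `δ`,
the direction-dependent `δ = ε sec θ` can be sandwiched between constants on the cells of a fine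
partition of `[0, 1]` (`tendsto_XX_mono`).
-/

open Real MeasureTheory Set Filter Topology

noncomputable def zeta2 : ℝ := Real.pi ^ 2 / 6

noncomputable def psi (x : ℝ) : ℝ := ((1 - x) / x) * (1 + Real.log (x / (1 - x)))

/-- The density of the limiting measure. -/
noncomputable def hdens (t : ℝ) : ℝ :=
  if t ≤ 1 / 2 then 2 / zeta2
  else if t ≤ 1 then (2 / zeta2) * psi t
  else 0

/-- The free path length of the billiard in the flat torus with a circular
scatterer of radius `ε`, with trajectory starting at the origin in direction `ω`. -/
noncomputable def freePath (ε ω : ℝ) : ℝ :=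
  sInf {τ : ℝ | 0 < τ ∧ ∃ p : ℤ × ℤ, p ≠ (0, 0) ∧
    Real.sqrt ((τ * Real.cos ω - p.1) ^ 2 + (τ * Real.sin ω - p.2) ^ 2) ≤ ε}

namespace FreePath

/-! ### The fourth moment of Kloosterman sums over a finite ring -/

/-- The complete Kloosterman-type sum over the units of a finite ring. -/
noncomputable def kloo {R : Type*} [CommRing R] [Fintype R] [DecidableEq R]
    (ψ : AddChar R ℂ) (x y : R) : ℂ :=
  ∑ u : Rˣ, ψ (x * (u : R) + y * ((u⁻¹ : Rˣ) : R))

section ring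
variable {R : Type*} [CommRing R] [Fintype R] [DecidableEq R] {ψ : AddChar R ℂ}

/-- Orthogonality of the characters of `R × R`: the second moment of an exponential sum counts
coincidences among its frequencies. -/
lemma parseval (hψ : ψ.IsPrimitive) {ι : Type*} [Fintype ι] (α β : ι → R) :
    ∑ x : R, ∑ y : R, ‖∑ i, ψ (x * α i + y * β i)‖ ^ 2 =
      (Fintype.card R : ℝ) ^ 2 *
        (Finset.univ.filter fun p : ι × ι => α p.1 = α p.2 ∧ β p.1 = β p.2).card := by
  have key : ∀ x y : R, ((‖∑ i, ψ (x * α i + y * β i)‖ ^ 2 : ℝ) : ℂ) =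
      ∑ p : ι × ι, ψ (x * (α p.1 - α p.2)) * ψ (y * (β p.1 - β p.2)) := by
    intro x y
    rw [← Complex.normSq_eq_norm_sq, ← Complex.mul_conj, map_sum, Finset.sum_mul_sum,
      Fintype.sum_prod_type]
    refine Finset.sum_congr rfl fun i _ => Finset.sum_congr rfl fun j _ => ?_
    rw [← AddChar.map_neg_eq_conj, ← AddChar.map_add_eq_mul, ← AddChar.map_add_eq_mul]
    congr 1
    ring
  have h2 : ((∑ x : R, ∑ y : R, ‖∑ i, ψ (x * α i + y * β i)‖ ^ 2 : ℝ) : ℂ) =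
      ((Fintype.card R : ℝ) ^ 2 *
        (Finset.univ.filter fun p : ι × ι => α p.1 = α p.2 ∧ β p.1 = β p.2).card : ℝ) := by
    push_cast
    have : ∀ x y : R, ((‖∑ i, ψ (x * α i + y * β i)‖ : ℂ) ^ 2) =
      ∑ p : ι × ι, ψ (x * (α p.1 - α p.2)) * ψ (y * (β p.1 - β p.2)) := by
      intro x y
      rw [← key]; push_cast; rfl
    simp_rw [this]
    have e1 : ∑ x : R, ∑ y : R, ∑ p : ι × ι, ψ (x * (α p.1 - α p.2)) * ψ (y * (β p.1 - β p.2))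
        = ∑ p : ι × ι, (∑ x : R, ψ (x * (α p.1 - α p.2))) *
            ∑ y : R, ψ (y * (β p.1 - β p.2)) := by
      simp_rw [Finset.sum_mul_sum]
      rw [Finset.sum_comm]
      rw [Finset.sum_comm]
      conv_rhs => rw [Finset.sum_comm]
      refine Finset.sum_congr rfl fun x _ => ?_
      rw [Finset.sum_comm]
    rw [e1]
    simp_rw [AddChar.sum_mulShift _ hψ, sub_eq_zero]
    rw [Finset.card_filter]
    push_cast
    rw [Finset.mul_sum]
    refine Finset.sum_congr rfl fun p _ => ?_
    by_cases h1 : α p.1 = α p.2 <;> by_cases h2 : β p.1 = β p.2 <;> simp [h1, h2, sq]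
  exact_mod_cast h2

lemma kloo_sq (x y : R) : kloo ψ x y ^ 2 =
    ∑ i : Rˣ × Rˣ, ψ (x * ((i.1 : R) + i.2) + y * (((i.1⁻¹ : Rˣ) : R) + ((i.2⁻¹ : Rˣ) : R))) := by
  rw [kloo, sq, Finset.sum_mul_sum, Fintype.sum_prod_type]
  refine Finset.sum_congr rfl fun i _ => Finset.sum_congr rfl fun j _ => ?_
  rw [← AddChar.map_add_eq_mul]
  congr 1
  ring

lemma kloo_smul (x y : R) (v : Rˣ) :
    kloo ψ (x * v) (y * ((v⁻¹ : Rˣ) : R)) = kloo ψ x y := by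
  rw [kloo, kloo]
  refine Fintype.sum_equiv (Equiv.mulLeft v) _ _ fun u => ?_
  simp only [Equiv.coe_mulLeft, mul_inv, Units.val_mul]
  congr 1
  ring

lemma kloo_symm (x y : R) : kloo ψ x y = kloo ψ y x := by
  rw [kloo, kloo]
  refine Fintype.sum_equiv (Equiv.inv _) _ _ fun u => ?_
  simp [add_comm]

lemma norm_kloo_le (x y : R) : ‖kloo ψ x y‖ ≤ Fintype.card Rˣ := by
  rw [kloo]
  refine (norm_sum_le _ _).trans ?_
  simp

/-- Units with `a + b = c + d` and `a⁻¹ + b⁻¹ = c⁻¹ + d⁻¹` satisfy `(c - a) (c - b) (a + b) = 0`. In the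
coordinates `x = c - a`, `y = c - b` and `c`, which determine the quadruple, this is the equation
`2 x y c = x y (x + y)`. -/
lemma card_quad_le :
    (Finset.univ.filter fun p : (Rˣ × Rˣ) × (Rˣ × Rˣ) =>
      ((p.1.1 : R) + p.1.2 = (p.2.1 : R) + p.2.2) ∧
      (((p.1.1⁻¹ : Rˣ) : R) + ((p.1.2⁻¹ : Rˣ) : R) =
        ((p.2.1⁻¹ : Rˣ) : R) + ((p.2.2⁻¹ : Rˣ) : R))).card ≤
    ∑ x : R, ∑ y : R, (Finset.univ.filter fun c : R => 2 * (x * y) * c = x * y * (x + y)).card := by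
  have : ∑ x : R, ∑ y : R,
      (Finset.univ.filter fun c : R => 2 * (x * y) * c = x * y * (x + y)).card =
      (Finset.univ.filter fun q : (R × R) × R =>
        2 * (q.1.1 * q.1.2) * q.2 = q.1.1 * q.1.2 * (q.1.1 + q.1.2)).card := by
    simp_rw [Finset.card_filter, Fintype.sum_prod_type]
  rw [this]
  refine Finset.card_le_card_of_injOn
    (fun p => (((p.2.1 : R) - p.1.1, (p.2.1 : R) - p.1.2), (p.2.1 : R))) ?_ ?_
  · rintro ⟨⟨a, b⟩, ⟨c, d⟩⟩ h
    simp only [Finset.coe_filter, Finset.mem_univ, true_and, mem_ofPred_eq] at h ⊢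
    obtain ⟨h1, h2⟩ := h
    have e : ((a : R) + b) * (c * d) = (c + d) * (a * b) := by
      have ha : (a : R) * ((a⁻¹ : Rˣ) : R) = 1 := Units.mul_inv a
      have hb : (b : R) * ((b⁻¹ : Rˣ) : R) = 1 := Units.mul_inv b
      have hc : (c : R) * ((c⁻¹ : Rˣ) : R) = 1 := Units.mul_inv c
      have hd : (d : R) * ((d⁻¹ : Rˣ) : R) = 1 := Units.mul_inv d
      linear_combination (a * b * c * d : R) * h2 - (b * c * d : R) * ha - (a * c * d : R) * hb
        + (a * b * d : R) * hc + (a * b * c : R) * hd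
    have hd : (d : R) = a + b - c := by linear_combination -h1
    rw [hd] at e
    linear_combination -e
  · rintro ⟨⟨a, b⟩, ⟨c, d⟩⟩ h ⟨⟨a', b'⟩, ⟨c', d'⟩⟩ h' heq
    simp only [Finset.coe_filter, Finset.mem_univ, true_and, mem_ofPred_eq, Prod.mk.injEq]
      at h h' heq ⊢
    obtain ⟨⟨e1, e2⟩, e3⟩ := heq
    have ea : (a : R) = a' := by linear_combination e3 - e1
    have eb : (b : R) = b' := by linear_combination e3 - e2
    have ed : (d : R) = d' := by linear_combination h'.1 - h.1 + ea + eb - e3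
    exact ⟨⟨Units.ext ea, Units.ext eb⟩, Units.ext e3, Units.ext ed⟩

/-- The solutions of `u c = v`, if there are any, form a coset of those of `u c = 0`. -/
lemma card_lin_le (u v : R) : (Finset.univ.filter fun c : R => u * c = v).card ≤
    (Finset.univ.filter fun c : R => u * c = 0).card := by
  rcases (Finset.univ.filter fun c : R => u * c = v).eq_empty_or_nonempty with h | ⟨c₀, h⟩
  · simp [h]
  · refine Finset.card_le_card_of_injOn (fun c => c - c₀) ?_ ?_
    · intro c hc
      simp only [Finset.coe_filter, Finset.mem_filter, Finset.mem_univ, true_and,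
        mem_ofPred_eq] at h hc ⊢
      rw [mul_sub, hc, h, sub_self]
    · intro c _ c' _ h
      simpa using h

/-- Kloosterman's argument: the sum is constant on the orbit `(x v, y v⁻¹)`, and its fourth moment
over all parameters counts quadruples of units. The number of `c` with `x c = 0` bounds how often the
orbit visits a given parameter. -/
lemma kloo_fourth (hψ : ψ.IsPrimitive) (x y : R) :
    (Fintype.card Rˣ : ℝ) * ‖kloo ψ x y‖ ^ 4 ≤
      (Finset.univ.filter fun c : R => x * c = 0).card * ((Fintype.card R : ℝ) ^ 2 *
        ∑ a : R, ∑ b : R, (Finset.univ.filter fun c : R => 2 * (a * b) * c = 0).card) := by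
  have h4 : ∑ p : R × R, ‖kloo ψ p.1 p.2‖ ^ 4 ≤ (Fintype.card R : ℝ) ^ 2 *
        ∑ a : R, ∑ b : R, (Finset.univ.filter fun c : R => 2 * (a * b) * c = 0).card := by
    have e : ∀ p : R × R, ‖kloo ψ p.1 p.2‖ ^ 4 = ‖kloo ψ p.1 p.2 ^ 2‖ ^ 2 := by
      intro p; rw [norm_pow]; ring
    simp_rw [e, kloo_sq]
    rw [Fintype.sum_prod_type, parseval hψ]
    refine mul_le_mul_of_nonneg_left ?_ (by positivity)
    have h := (card_quad_le (R := R)).trans (Finset.sum_le_sum fun a _ =>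
      Finset.sum_le_sum fun b _ => card_lin_le (2 * (a * b)) (a * b * (a + b)))
    exact_mod_cast h
  have h1 : (Fintype.card Rˣ : ℝ) * ‖kloo ψ x y‖ ^ 4 =
      ∑ v : Rˣ, ‖kloo ψ (x * v) (y * ((v⁻¹ : Rˣ) : R))‖ ^ 4 := by
    simp [kloo_smul]
  rw [h1]
  have h2 : ∑ v : Rˣ, ‖kloo ψ (x * v) (y * ((v⁻¹ : Rˣ) : R))‖ ^ 4 =
      ∑ p : R × R, ∑ v ∈ Finset.univ.filter (fun v : Rˣ => (x * v, y * ((v⁻¹ : Rˣ) : R)) = p),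
        ‖kloo ψ p.1 p.2‖ ^ 4 := by
    rw [← Finset.sum_fiberwise Finset.univ (fun v : Rˣ => (x * (v : R), y * ((v⁻¹ : Rˣ) : R)))]
    refine Finset.sum_congr rfl fun p _ => Finset.sum_congr rfl fun v hv => ?_
    simp only [Finset.mem_filter, Finset.mem_univ, true_and] at hv
    rw [← hv]
  rw [h2]
  calc _ ≤ ∑ p : R × R, ((Finset.univ.filter fun c : R => x * c = 0).card : ℝ) *
        ‖kloo ψ p.1 p.2‖ ^ 4 := by
        refine Finset.sum_le_sum fun p _ => ?_
        rw [Finset.sum_const, nsmul_eq_mul]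
        gcongr
        refine le_trans ?_ (card_lin_le x p.1)
        refine Finset.card_le_card_of_injOn (fun v => (v : R)) ?_ ?_
        · intro v hv
          simp only [Finset.coe_filter, Finset.mem_univ, true_and, mem_ofPred_eq] at hv ⊢
          rw [← hv]
        · intro v _ v' _ h
          exact Units.ext h
    _ ≤ _ := by
        rw [← Finset.mul_sum]
        gcongr

end ring

/-! ### A nontrivial bound for Kloosterman sums modulo `n` -/

/-- The divisor function is `O(n ^ (1/4))`. Prime by prime, `(v + 1) ^ 4 ≤ 41 * 2 ^ v` always, and
`(v + 1) ^ 4 ≤ 16 ^ v ≤ p ^ v` for `p ≥ 16`, so only the primes below `16` cost a factor `41`. -/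
lemma card_divisors_pow_four_le {n : ℕ} (hn : n ≠ 0) : n.divisors.card ^ 4 ≤ 41 ^ 16 * n := by
  have h2 : ∀ v : ℕ, (v + 1) ^ 4 ≤ 41 * 2 ^ v := by
    intro v
    rcases lt_or_ge v 6 with h | h
    · interval_cases v <;> norm_num
    · induction v, h using Nat.le_induction with
      | base => norm_num
      | succ v hv ih =>
        have : (v + 1 + 1) ^ 4 ≤ 2 * (v + 1) ^ 4 := by
          obtain ⟨w, rfl⟩ := Nat.exists_eq_add_of_le hv
          ring_nf
          nlinarith [sq_nonneg w, Nat.zero_le (w ^ 3), Nat.zero_le (w ^ 4), Nat.zero_le w,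
            Nat.zero_le (w ^ 2)]
        calc _ ≤ 2 * (v + 1) ^ 4 := this
          _ ≤ 2 * (41 * 2 ^ v) := by gcongr
          _ = _ := by ring
  have h16 : ∀ v : ℕ, (v + 1) ^ 4 ≤ 16 ^ v := by
    intro v
    have : v + 1 ≤ 2 ^ v := Nat.lt_two_pow_self
    calc _ ≤ (2 ^ v) ^ 4 := by gcongr
      _ = _ := by rw [← pow_mul, mul_comm v 4, pow_mul]; norm_num
  rw [Nat.card_divisors hn, ← Finset.prod_pow]
  have h1 : ∀ p ∈ n.primeFactors, (n.factorization p + 1) ^ 4 ≤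
      (if p < 16 then 41 else 1) * p ^ n.factorization p := by
    intro p hp
    have hp2 := (Nat.prime_of_mem_primeFactors hp).two_le
    split_ifs with h
    · refine (h2 _).trans ?_
      gcongr
    · rw [one_mul]
      refine (h16 _).trans ?_
      gcongr
      omega
  refine (Finset.prod_le_prod' h1).trans ?_
  rw [Finset.prod_mul_distrib]
  have h3 : ∏ p ∈ n.primeFactors, p ^ n.factorization p = n :=
    Nat.prod_factorization_pow_eq_self hn
  rw [h3]
  gcongr
  rw [Finset.prod_ite]
  simp only [Finset.prod_const, one_pow, mul_one]
  gcongr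
  · norm_num
  · calc _ ≤ (Finset.range 16).card := by
          refine Finset.card_le_card fun p hp => ?_
          simp only [Finset.mem_filter] at hp
          simpa using hp.2
      _ = 16 := by simp

lemma card_nsmul_zmod_le (n : ℕ) [NeZero n] {k : ℕ} (hk : 0 < k) :
    (Finset.univ.filter fun c : ZMod n => (k : ZMod n) * c = 0).card ≤ k := by
  have := IsAddCyclic.card_nsmul_eq_zero_le (α := ZMod n) hk
  simpa [nsmul_eq_mul] using this

lemma exists_mul_eq_gcd (n : ℕ) [NeZero n] (a : ZMod n) :
    ∃ s : ZMod n, a * s = (Nat.gcd a.val n : ZMod n) := by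
  refine ⟨(Nat.gcdA a.val n : ZMod n), ?_⟩
  have h := congrArg (Int.cast : ℤ → ZMod n) (Nat.gcd_eq_gcd_ab a.val n)
  push_cast at h
  simp only [ZMod.natCast_val, ZMod.cast_id', id_eq, CharP.cast_eq_zero, zero_mul, add_zero] at h
  exact h.symm

lemma sum_gcd_le (n : ℕ) [NeZero n] :
    ∑ a : ZMod n, Nat.gcd a.val n ≤ n * n.divisors.card := by
  have hn : n ≠ 0 := NeZero.ne n
  have h1 : ∀ a ∈ (Finset.univ : Finset (ZMod n)), Nat.gcd a.val n ∈ n.divisors := fun a _ =>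
    Nat.mem_divisors.2 ⟨Nat.gcd_dvd_right _ _, hn⟩
  rw [← Finset.sum_fiberwise_of_maps_to h1]
  calc _ ≤ ∑ d ∈ n.divisors, n := by
        refine Finset.sum_le_sum fun d hd => ?_
        obtain ⟨k, hk⟩ := Nat.dvd_of_mem_divisors hd
        have hk0 : 0 < k := Nat.pos_of_ne_zero fun h => hn (by simp [hk, h])
        rw [Finset.sum_congr rfl (g := fun _ => d) (by simp), Finset.sum_const, smul_eq_mul]
        have : (Finset.univ.filter fun a : ZMod n => Nat.gcd a.val n = d).card ≤ k := by
          refine le_trans (Finset.card_le_card fun a ha => ?_) (card_nsmul_zmod_le n hk0)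
          simp only [Finset.mem_filter, Finset.mem_univ, true_and] at ha ⊢
          obtain ⟨l, hl⟩ : d ∣ a.val := ha ▸ Nat.gcd_dvd_left _ _
          have : a = ((d * l : ℕ) : ZMod n) := by rw [← hl]; simp
          rw [this, ← Nat.cast_mul, show k * (d * l) = n * l by rw [hk]; ring]
          simp
        calc _ ≤ k * d := by gcongr
          _ = n := by rw [hk]; ring
    _ = _ := by simp [mul_comm]

/-- Since `gcd(a, n)` is a multiple of `a` modulo `n`, the annihilator of `2 a b` is contained in that
of `2 gcd(a, n) gcd(b, n)`. -/
lemma sum_quad_le (n : ℕ) [NeZero n] :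
    ∑ a : ZMod n, ∑ b : ZMod n, (Finset.univ.filter fun c : ZMod n => 2 * (a * b) * c = 0).card ≤
      2 * (n * n.divisors.card) ^ 2 := by
  have hn : 0 < n := NeZero.pos n
  calc _ ≤ ∑ a : ZMod n, ∑ b : ZMod n, 2 * (Nat.gcd a.val n * Nat.gcd b.val n) := by
        refine Finset.sum_le_sum fun a _ => Finset.sum_le_sum fun b _ => ?_
        refine le_trans (Finset.card_le_card fun c hc => ?_) (card_nsmul_zmod_le n
          (k := 2 * (Nat.gcd a.val n * Nat.gcd b.val n)) ?_)
        · simp only [Finset.mem_filter, Finset.mem_univ, true_and] at hc ⊢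
          obtain ⟨s, hs⟩ := exists_mul_eq_gcd n a
          obtain ⟨t, ht⟩ := exists_mul_eq_gcd n b
          push_cast
          rw [← hs, ← ht]
          linear_combination (s * t) * hc
        · have h1 := Nat.gcd_pos_of_pos_right a.val hn
          have h2 := Nat.gcd_pos_of_pos_right b.val hn
          positivity
    _ = 2 * (∑ a : ZMod n, Nat.gcd a.val n) ^ 2 := by
        rw [sq, Finset.sum_mul_sum, Finset.mul_sum]
        refine Finset.sum_congr rfl fun a _ => ?_
        rw [Finset.mul_sum]
    _ ≤ _ := by
        gcongr
        exact sum_gcd_le n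

lemma le_card_divisors_mul_totient (n : ℕ) : n ≤ n.divisors.card * n.totient := by
  rcases Nat.eq_zero_or_pos n with rfl | hn
  · simp
  conv_lhs => rw [← Nat.sum_totient n]
  rw [← smul_eq_mul, ← Finset.sum_const]
  refine Finset.sum_le_sum fun d hd => ?_
  exact Nat.le_of_dvd (Nat.totient_pos.2 hn) (Nat.totient_dvd_of_dvd (Nat.dvd_of_mem_divisors hd))

/-- The exponential `x ↦ exp (2 π i x)`. -/
noncomputable def ee (x : ℝ) : ℂ := Complex.exp (2 * π * Complex.I * x)

/-- The representative in `[0, n)` of the inverse of `b` modulo `n`. -/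
def invMod (n b : ℕ) : ℕ := ((b : ZMod n)⁻¹).val

/-- The Kloosterman sum attached to the Fourier mode `(m, j)` modulo `n`. -/
noncomputable def kl (m j : ℤ) (n : ℕ) : ℂ :=
  ∑ b ∈ (Finset.range n).filter (fun b => n.Coprime b), ee (m * b / n) * ee (j * invMod n b / n)

lemma sum_units (n : ℕ) [NeZero n] (F : ℕ → ℂ) :
    ∑ u : (ZMod n)ˣ, F (u : ZMod n).val =
      ∑ b ∈ (Finset.range n).filter (fun b => n.Coprime b), F b := by
  refine Finset.sum_bij (fun u _ => (u : ZMod n).val) ?_ ?_ ?_ ?_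
  · intro u _
    simp only [Finset.mem_filter, Finset.mem_range]
    exact ⟨ZMod.val_lt _, (ZMod.val_coe_unit_coprime u).symm⟩
  · intro u _ v _ h
    exact Units.ext (ZMod.val_injective n h)
  · intro b hb
    simp only [Finset.mem_filter, Finset.mem_range] at hb
    refine ⟨ZMod.unitOfCoprime b hb.2.symm, Finset.mem_univ _, ?_⟩
    rw [ZMod.coe_unitOfCoprime, ZMod.val_natCast, Nat.mod_eq_of_lt hb.1]
  · intro u _
    rfl

lemma kl_eq_kloo (m j : ℤ) (n : ℕ) [NeZero n] :
    kl m j n = kloo (ZMod.stdAddChar (N := n)) (m : ZMod n) (j : ZMod n) := by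
  rw [kl, ← sum_units n (fun b => ee (m * b / n) * ee (j * invMod n b / n)), kloo]
  refine Finset.sum_congr rfl fun u _ => ?_
  rw [AddChar.map_add_eq_mul]
  congr 1
  · have : (m : ZMod n) * (u : ZMod n) = ((m * ((u : ZMod n).val : ℤ) : ℤ) : ZMod n) := by
      push_cast; simp
    rw [this, ZMod.stdAddChar_coe, ee]
    congr 1
    push_cast
    ring
  · have : (j : ZMod n) * ((u⁻¹ : (ZMod n)ˣ) : ZMod n) =
        ((j * (((u : ZMod n)⁻¹).val : ℤ) : ℤ) : ZMod n) := by
      push_cast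
      simp
    rw [this, ZMod.stdAddChar_coe, ee, invMod, ZMod.natCast_zmod_val]
    generalize ((u : ZMod n)⁻¹).val = k
    congr 1
    push_cast
    ring

lemma norm_ee (x : ℝ) : ‖ee x‖ = 1 := by
  rw [ee, show 2 * (π : ℂ) * Complex.I * x = ((2 * π * x : ℝ) : ℂ) * Complex.I by push_cast; ring]
  exact Complex.norm_exp_ofReal_mul_I _

lemma norm_kl_le (m j : ℤ) (n : ℕ) : ‖kl m j n‖ ≤ n.totient := by
  rw [kl]
  refine (norm_sum_le _ _).trans ?_
  simp [norm_ee, Nat.totient]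

/-- From the fourth moment, `‖K‖ ^ 4 ≤ C n ^ 4 d(n) ^ 2 / φ(n)` with `d` the divisor function; together
with `n ≤ d(n) φ(n)` and `d(n) ^ 4 = O(n)` this saves a power `n ^ (1/16)` over the trivial bound. -/
lemma kl_bound (m j : ℤ) (h : m ≠ 0 ∨ j ≠ 0) :
    ∃ C : ℝ, ∀ n : ℕ, 0 < n → (‖kl m j n‖ / n) ^ 16 ≤ C / n := by
  obtain ⟨M, hM0, hM⟩ : ∃ M : ℕ, 0 < M ∧ ∀ n : ℕ, 0 < n →
      (n.totient : ℝ) * ‖kl m j n‖ ^ 4 ≤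
        M * ((n : ℝ) ^ 2 * (2 * (n * n.divisors.card) ^ 2 : ℕ)) := by
    have main : ∀ a b : ℤ, a ≠ 0 → ∀ n : ℕ, ∀ _ : NeZero n, (n.totient : ℝ) *
        ‖kloo (ZMod.stdAddChar (N := n)) (a : ZMod n) (b : ZMod n)‖ ^ 4 ≤
        a.natAbs * ((n : ℝ) ^ 2 * (2 * (n * n.divisors.card) ^ 2 : ℕ)) := by
      intro a b ha n _
      have h := kloo_fourth (ZMod.isPrimitive_stdAddChar n) (a : ZMod n) (b : ZMod n)
      rw [ZMod.card_units_eq_totient, ZMod.card] at h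
      refine h.trans ?_
      have h1 : (Finset.univ.filter fun c : ZMod n => (a : ZMod n) * c = 0).card ≤ a.natAbs := by
        refine le_trans (Finset.card_le_card fun c hc => ?_)
          (card_nsmul_zmod_le n (Int.natAbs_pos.2 ha))
        simp only [Finset.mem_filter, Finset.mem_univ, true_and] at hc ⊢
        rcases Int.natAbs_eq a with e | e <;> rw [e] at hc <;> simpa using hc
      have h2 := sum_quad_le n
      gcongr
    rcases h with h | h
    · refine ⟨m.natAbs, Int.natAbs_pos.2 h, fun n hn => ?_⟩
      have : NeZero n := ⟨hn.ne'⟩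
      rw [kl_eq_kloo]
      exact main m j h n _
    · refine ⟨j.natAbs, Int.natAbs_pos.2 h, fun n hn => ?_⟩
      have : NeZero n := ⟨hn.ne'⟩
      rw [kl_eq_kloo, kloo_symm]
      exact main j m h n _
  obtain ⟨A, hA⟩ : ∃ A : ℝ, ∀ n : ℕ, n ≠ 0 → (n.divisors.card : ℝ) ^ 4 ≤ A * n :=
    ⟨(41 ^ 16 : ℕ), fun n hn => by exact_mod_cast card_divisors_pow_four_le hn⟩
  refine ⟨(2 * M) ^ 4 * A ^ 3, fun n hn => ?_⟩
  have hn' : (0 : ℝ) < n := by exact_mod_cast hn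
  set d : ℝ := (n.divisors.card : ℝ) with hd
  set x : ℝ := ‖kl m j n‖ / n with hx
  have hd0 : 0 ≤ d := by positivity
  have h1 : d ^ 4 ≤ A * n := hA n hn.ne'
  have h2 : (n : ℝ) ≤ d * n.totient := by
    rw [hd]; exact_mod_cast le_card_divisors_mul_totient n
  have h3 := hM n hn
  have hk : ‖kl m j n‖ = x * n := by rw [hx]; field_simp
  rw [hk] at h3
  push_cast at h3
  rw [← hd] at h3
  have h4 : n * x ^ 4 ≤ 2 * M * d ^ 3 := by
    have hx0 : 0 ≤ x := by positivity
    have : (n * x ^ 4) * n ^ 4 ≤ (2 * M * d ^ 3) * n ^ 4 := by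
      calc _ ≤ (d * n.totient * x ^ 4) * n ^ 4 := by gcongr
        _ = d * (n.totient * (x * n) ^ 4) := by ring
        _ ≤ d * (M * ((n : ℝ) ^ 2 * (2 * (n * d) ^ 2))) := mul_le_mul_of_nonneg_left h3 hd0
        _ = _ := by ring
    exact le_of_mul_le_mul_right this (pow_pos hn' 4)
  rw [le_div_iff₀ hn']
  have h5 : (x ^ 16 * n) * n ^ 3 ≤ ((2 * M) ^ 4 * A ^ 3) * n ^ 3 := by
    calc _ = (n * x ^ 4) ^ 4 := by ring
      _ ≤ (2 * M * d ^ 3) ^ 4 := by gcongr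
      _ = (2 * M) ^ 4 * (d ^ 4) ^ 3 := by ring
      _ ≤ (2 * M) ^ 4 * (A * n) ^ 3 :=
          mul_le_mul_of_nonneg_left (pow_le_pow_left₀ (pow_nonneg hd0 4) h1 3) (by positivity)
      _ = _ := by ring
  exact le_of_mul_le_mul_right h5 (pow_pos hn' 3)

lemma kl_tendsto (m j : ℤ) (h : m ≠ 0 ∨ j ≠ 0) :
    Tendsto (fun n : ℕ => ‖kl m j n‖ / n) atTop (𝓝 0) := by
  obtain ⟨C, hC⟩ := kl_bound m j h
  have h1 : Tendsto (fun n : ℕ => (‖kl m j n‖ / n) ^ 16) atTop (𝓝 0) := by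
    refine tendsto_of_tendsto_of_tendsto_of_le_of_le' tendsto_const_nhds
      (tendsto_const_div_atTop_nhds_zero_nat C) ?_ ?_
    · exact Eventually.of_forall fun n => by positivity
    · filter_upwards [eventually_gt_atTop 0] with n hn using hC n hn
  have h2 := h1.rpow_const (p := (1 / 16 : ℝ)) (Or.inr (by norm_num))
  rw [Real.zero_rpow (by norm_num)] at h2
  refine h2.congr fun n => ?_
  rw [← Real.rpow_natCast, ← Real.rpow_mul (by positivity)]
  norm_num

/-! ### Mean value of the totient function -/

/-- The Riemann sum of `u` over `[0, 1]` with mesh `δ`. -/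
noncomputable def rsum (u : ℝ → ℂ) (δ : ℝ) : ℂ :=
  ∑ k ∈ Finset.Ioc 0 ⌊1 / δ⌋₊, (δ : ℂ) * u (δ * k)

lemma floor_mul_le {δ : ℝ} (hδ : 0 < δ) : (⌊1 / δ⌋₊ : ℝ) * δ ≤ 1 := by
  have := Nat.floor_le (show 0 ≤ 1 / δ by positivity)
  rwa [le_div_iff₀ hδ] at this

lemma mul_mem_of_mem {δ : ℝ} (hδ : 0 < δ) {k : ℕ} (hk : k ∈ Finset.Ioc 0 ⌊1 / δ⌋₊) :
    0 < δ * k ∧ δ * k ≤ 1 := by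
  rw [Finset.mem_Ioc] at hk
  have h1 : (0 : ℝ) < k := by exact_mod_cast hk.1
  have h2 : (k : ℝ) ≤ ⌊1 / δ⌋₊ := by exact_mod_cast hk.2
  refine ⟨by positivity, ?_⟩
  calc δ * k ≤ δ * ⌊1 / δ⌋₊ := by gcongr
    _ ≤ 1 := by rw [mul_comm]; exact floor_mul_le hδ

lemma norm_rsum_le {u : ℝ → ℂ} {C : ℝ} (hC : ∀ t ∈ Icc (0 : ℝ) 1, ‖u t‖ ≤ C) {δ : ℝ}
    (hδ : 0 < δ) : ‖rsum u δ‖ ≤ C := by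
  have hC0 : 0 ≤ C := (norm_nonneg _).trans (hC 0 (by simp))
  rw [rsum]
  refine (norm_sum_le_of_le (f := fun k : ℕ => (δ : ℂ) * u (δ * k)) (n := fun _ => δ * C) _
    fun k hk => ?_).trans ?_
  · have h := mul_mem_of_mem hδ hk
    rw [norm_mul, Complex.norm_real, Real.norm_of_nonneg hδ.le]
    gcongr
    exact hC _ ⟨h.1.le, h.2⟩
  · simp only [Finset.sum_const, Nat.card_Ioc, tsub_zero, nsmul_eq_mul]
    calc _ = (⌊1 / δ⌋₊ * δ) * C := by ring
      _ ≤ 1 * C := by gcongr; exact floor_mul_le hδ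
      _ = C := one_mul C

lemma tendsto_floor_mul : Tendsto (fun δ : ℝ => (⌊1 / δ⌋₊ : ℝ) * δ) (𝓝[>] 0) (𝓝 1) := by
  have h : Tendsto (fun δ : ℝ => 1 - δ) (𝓝[>] 0) (𝓝 1) := by
    have : Tendsto (fun δ : ℝ => 1 - δ) (𝓝 0) (𝓝 1) :=
      (by fun_prop : Continuous fun δ : ℝ => 1 - δ).tendsto' _ _ (by simp)
    exact this.mono_left nhdsWithin_le_nhds
  refine tendsto_of_tendsto_of_tendsto_of_le_of_le' h tendsto_const_nhds ?_ ?_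
  · filter_upwards [self_mem_nhdsWithin] with δ hδ
    have hδ : 0 < δ := hδ
    have := Nat.lt_floor_add_one (1 / δ)
    rw [div_lt_iff₀ hδ] at this
    linarith
  · filter_upwards [self_mem_nhdsWithin] with δ hδ using floor_mul_le hδ

lemma sum_Ioc_zero {M : Type*} [AddCommMonoid M] (g : ℕ → M) (N : ℕ) :
    ∑ k ∈ Finset.Ioc 0 N, g k = ∑ k ∈ Finset.range N, g (k + 1) := by
  induction N with
  | zero => simp
  | succ N ih => rw [Finset.sum_Ioc_succ_top (Nat.zero_le _), Finset.sum_range_succ, ih]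

lemma tendsto_rsum {u : ℝ → ℂ} (hu : Continuous u) :
    Tendsto (rsum u) (𝓝[>] 0) (𝓝 (∫ t in (0 : ℝ)..1, u t)) := by
  have h1 : Tendsto (fun δ : ℝ => ∫ t in (0 : ℝ)..(⌊1 / δ⌋₊ : ℝ) * δ, u t) (𝓝[>] 0)
      (𝓝 (∫ t in (0 : ℝ)..1, u t)) := by
    have hc : Continuous fun x : ℝ => ∫ t in (0 : ℝ)..x, u t :=
      intervalIntegral.continuous_primitive (fun a b => hu.intervalIntegrable a b) 0
    exact (hc.tendsto 1).comp tendsto_floor_mul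
  have h2 : Tendsto (fun δ : ℝ => rsum u δ - ∫ t in (0 : ℝ)..(⌊1 / δ⌋₊ : ℝ) * δ, u t) (𝓝[>] 0)
      (𝓝 0) := by
    rw [Metric.tendsto_nhds]
    intro η hη
    have huc := (isCompact_Icc (a := (0 : ℝ)) (b := 1)).uniformContinuousOn_of_continuous
      hu.continuousOn
    rw [Metric.uniformContinuousOn_iff] at huc
    obtain ⟨r, hr, hru⟩ := huc (η / 2) (by positivity)
    filter_upwards [Ioo_mem_nhdsGT hr] with δ hδ
    have hδ0 : 0 < δ := hδ.1
    rw [dist_zero_right]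
    set N := ⌊1 / δ⌋₊ with hN
    have e1 : ∫ t in (0 : ℝ)..(N : ℝ) * δ, u t =
        ∑ k ∈ Finset.range N, ∫ t in ((k : ℕ) : ℝ) * δ..((k + 1 : ℕ) : ℝ) * δ, u t := by
      rw [intervalIntegral.sum_integral_adjacent_intervals
        (a := fun k : ℕ => (k : ℝ) * δ) fun k _ => hu.intervalIntegrable _ _]
      simp
    have e2 : rsum u δ = ∑ k ∈ Finset.range N,
        ∫ t in ((k : ℕ) : ℝ) * δ..((k + 1 : ℕ) : ℝ) * δ, u (δ * (k + 1 : ℕ)) := by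
      rw [rsum, ← hN, sum_Ioc_zero]
      refine Finset.sum_congr rfl fun k _ => ?_
      rw [intervalIntegral.integral_const]
      have : ((k + 1 : ℕ) : ℝ) * δ - (k : ℝ) * δ = δ := by push_cast; ring
      rw [this, Complex.real_smul]
    rw [e1, e2, ← Finset.sum_sub_distrib]
    have : ∀ k ∈ Finset.range N,
        ‖(∫ t in ((k : ℕ) : ℝ) * δ..((k + 1 : ℕ) : ℝ) * δ, u (δ * (k + 1 : ℕ))) -
          ∫ t in ((k : ℕ) : ℝ) * δ..((k + 1 : ℕ) : ℝ) * δ, u t‖ ≤ (η / 2) * δ := by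
      intro k hk
      rw [← intervalIntegral.integral_sub (by simp) (hu.intervalIntegrable _ _)]
      have hb := intervalIntegral.norm_integral_le_of_norm_le_const (a := ((k : ℕ) : ℝ) * δ)
        (b := ((k + 1 : ℕ) : ℝ) * δ) (C := η / 2)
        (f := fun t => u (δ * (k + 1 : ℕ)) - u t) ?_
      · refine hb.trans (le_of_eq ?_)
        have : ((k + 1 : ℕ) : ℝ) * δ - (k : ℝ) * δ = δ := by push_cast; ring
        rw [this, abs_of_pos hδ0]
      · intro t ht
        have hle : ((k : ℕ) : ℝ) * δ ≤ ((k + 1 : ℕ) : ℝ) * δ := by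
          gcongr
          omega
        rw [uIoc_of_le hle] at ht
        have hk1 : δ * ((k + 1 : ℕ) : ℝ) ≤ 1 := (mul_mem_of_mem hδ0 (k := k + 1) (by
          rw [Finset.mem_range] at hk
          simp only [Finset.mem_Ioc]
          omega)).2
        have hk0 : 0 ≤ (k : ℝ) * δ := by positivity
        have e : ((k + 1 : ℕ) : ℝ) * δ = k * δ + δ := by push_cast; ring
        have e' : δ * ((k + 1 : ℕ) : ℝ) = k * δ + δ := by push_cast; ring
        rw [← dist_eq_norm]
        refine (hru _ ⟨by positivity, hk1⟩ _ ⟨?_, ?_⟩ ?_).le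
        · linarith [ht.1]
        · linarith [ht.2]
        · rw [Real.dist_eq, abs_lt]
          constructor <;> linarith [ht.1, ht.2, hδ.2]
    refine (norm_sum_le_of_le _ this).trans_lt ?_
    simp only [Finset.sum_const, Finset.card_range, nsmul_eq_mul]
    calc _ = (N * δ) * (η / 2) := by ring
      _ ≤ 1 * (η / 2) := by gcongr; exact floor_mul_le hδ0
      _ < η := by linarith
  have := h2.add h1
  simpa using this

open scoped ArithmeticFunction.Moebius in
lemma totient_eq (n : ℕ) (hn : 0 < n) : (n.totient : ℂ) =
    ∑ x ∈ n.divisorsAntidiagonal, (μ x.1 : ℂ) * x.2 := by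
  have := (ArithmeticFunction.sum_eq_iff_sum_mul_moebius_eq (R := ℂ)
    (f := fun n => (n.totient : ℂ)) (g := fun n => (n : ℂ))).1 (fun m _ => by
      rw [← Nat.cast_sum, Nat.sum_totient]) n hn
  exact this.symm

lemma sum_divisorsAntidiagonal_swap (N : ℕ) (g : ℕ → ℕ → ℂ) :
    ∑ n ∈ Finset.Ioc 0 N, ∑ x ∈ n.divisorsAntidiagonal, g x.1 x.2 =
      ∑ d ∈ Finset.Ioc 0 N, ∑ k ∈ Finset.Ioc 0 (N / d), g d k := by
  rw [Finset.sum_sigma', Finset.sum_sigma']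
  refine Finset.sum_bij' (fun x _ => ⟨x.2.1, x.2.2⟩) (fun y _ => ⟨y.1 * y.2, (y.1, y.2)⟩)
    ?_ ?_ ?_ ?_ ?_
  · rintro ⟨n, d, k⟩ h
    simp only [Finset.mem_sigma, Finset.mem_Ioc, Nat.mem_divisorsAntidiagonal] at h ⊢
    obtain ⟨⟨h1, h2⟩, rfl, h4⟩ := h
    have hd : 0 < d := Nat.pos_of_ne_zero (left_ne_zero_of_mul h4)
    have hk : 0 < k := Nat.pos_of_ne_zero (right_ne_zero_of_mul h4)
    refine ⟨⟨hd, le_trans (Nat.le_mul_of_pos_right d hk) h2⟩, hk, ?_⟩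
    rw [Nat.le_div_iff_mul_le hd, mul_comm]
    exact h2
  · rintro ⟨d, k⟩ h
    simp only [Finset.mem_sigma, Finset.mem_Ioc, Nat.mem_divisorsAntidiagonal] at h ⊢
    obtain ⟨⟨h1, h2⟩, h3, h4⟩ := h
    rw [Nat.le_div_iff_mul_le h1, mul_comm] at h4
    exact ⟨⟨Nat.mul_pos h1 h3, h4⟩, trivial, (Nat.mul_pos h1 h3).ne'⟩
  · rintro ⟨n, d, k⟩ h
    simp only [Finset.mem_sigma, Nat.mem_divisorsAntidiagonal] at h
    obtain ⟨_, rfl, _⟩ := h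
    rfl
  · rintro ⟨d, k⟩ _
    rfl
  · rintro ⟨n, d, k⟩ _
    rfl

open scoped ArithmeticFunction.Moebius in
/-- The series `∑ μ(d) / d²` is `1 / ζ(2)`. -/
lemma tsum_moebius : ∑' d : ℕ, (μ d : ℂ) / (d : ℂ) ^ 2 = 1 / (zeta2 : ℂ) := by
  have h := LSeries_one_mul_Lseries_moebius (s := 2) (by norm_num)
  rw [LSeries_one_eq_riemannZeta (by norm_num), riemannZeta_two] at h
  have hz : (zeta2 : ℂ) = (π : ℂ) ^ 2 / 6 := by rw [zeta2]; push_cast; rfl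
  rw [hz, eq_div_iff (by simp [Real.pi_ne_zero]), mul_comm, ← h]
  congr 1
  rw [LSeries]
  refine tsum_congr fun d => ?_
  rw [LSeries.term_def]
  split_ifs with hd
  · simp [hd]
  · norm_cast

open scoped ArithmeticFunction.Moebius in
/-- Mean value of Euler's function with a weight: `φ(n)/n` has average `1/ζ(2)`. -/
lemma tendsto_totient_sum {u : ℝ → ℂ} (hu : Continuous u) :
    Tendsto (fun δ : ℝ => ∑ n ∈ Finset.Ioc 0 ⌊1 / δ⌋₊,
        ((δ / n : ℝ) : ℂ) * ((n.totient : ℂ) * u (δ * n))) (𝓝[>] 0)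
      (𝓝 (1 / (zeta2 : ℂ) * ∫ t in (0 : ℝ)..1, u t)) := by
  obtain ⟨C, hC⟩ := (isCompact_Icc (a := (0 : ℝ)) (b := 1)).exists_bound_of_continuousOn
    hu.continuousOn
  have hC0 : 0 ≤ C := (norm_nonneg _).trans (hC 0 (by simp))
  have key : ∀ δ : ℝ, 0 < δ → ∑ n ∈ Finset.Ioc 0 ⌊1 / δ⌋₊,
        ((δ / n : ℝ) : ℂ) * ((n.totient : ℂ) * u (δ * n)) =
      ∑' d : ℕ, (μ d : ℂ) / (d : ℂ) ^ 2 * rsum u (δ * d) := by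
    intro δ hδ
    set N := ⌊1 / δ⌋₊ with hN
    have e1 : ∀ d ∉ Finset.Ioc 0 N, (μ d : ℂ) / (d : ℂ) ^ 2 * rsum u (δ * d) = 0 := by
      intro d hd
      rcases Nat.eq_zero_or_pos d with rfl | h0
      · simp
      · have : N < d := by
          simp only [Finset.mem_Ioc, not_and, not_le] at hd
          exact hd h0
        have h1 : ⌊1 / (δ * d)⌋₊ = 0 := by
          rw [Nat.floor_eq_zero, div_lt_one (by positivity)]
          rw [hN, Nat.floor_lt (by positivity), div_lt_iff₀ hδ] at this
          linarith
        rw [rsum, h1]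
        simp
    rw [tsum_eq_sum e1]
    calc _ = ∑ n ∈ Finset.Ioc 0 N, ∑ x ∈ n.divisorsAntidiagonal,
          (μ x.1 : ℂ) / x.1 * ((δ : ℂ) * u (δ * (x.1 * x.2 : ℕ))) := by
          refine Finset.sum_congr rfl fun n hn => ?_
          rw [Finset.mem_Ioc] at hn
          rw [totient_eq n hn.1, Finset.sum_mul, Finset.mul_sum]
          refine Finset.sum_congr rfl fun x hx => ?_
          rw [Nat.mem_divisorsAntidiagonal] at hx
          obtain ⟨h1, h2⟩ := hx
          rw [h1]
          have hx1 : (x.1 : ℂ) ≠ 0 := by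
            rintro h; rw [← h1] at h2; simp_all
          have hx2 : (x.2 : ℂ) ≠ 0 := by
            rintro h; rw [← h1] at h2; simp_all
          have : (n : ℂ) = x.1 * x.2 := by rw [← h1]; push_cast; rfl
          push_cast
          rw [this]
          field_simp
      _ = _ := by
          rw [sum_divisorsAntidiagonal_swap N
            (fun d k => (μ d : ℂ) / d * ((δ : ℂ) * u (δ * (d * k : ℕ))))]
          refine Finset.sum_congr rfl fun d hd => ?_
          rw [Finset.mem_Ioc] at hd
          have hd0 : (d : ℂ) ≠ 0 := by exact_mod_cast hd.1.ne'
          have : ⌊1 / (δ * d)⌋₊ = N / d := by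
            rw [← div_div, Nat.floor_div_natCast]
          rw [rsum, this, Finset.mul_sum]
          refine Finset.sum_congr rfl fun k _ => ?_
          have : δ * (d * k : ℕ) = δ * d * k := by push_cast; ring
          rw [this]
          push_cast
          field_simp
  have hlim : Tendsto (fun δ : ℝ => ∑' d : ℕ, (μ d : ℂ) / (d : ℂ) ^ 2 * rsum u (δ * d)) (𝓝[>] 0)
      (𝓝 (∑' d : ℕ, (μ d : ℂ) / (d : ℂ) ^ 2 * ∫ t in (0 : ℝ)..1, u t)) := by
    refine tendsto_tsum_of_dominated_convergence
      (bound := fun d : ℕ => C * (1 / (d : ℝ) ^ 2)) ?_ ?_ ?_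
    · exact (Real.summable_one_div_nat_pow.2 (by norm_num)).mul_left C
    · intro d
      rcases Nat.eq_zero_or_pos d with rfl | h0
      · simp
      · refine ((tendsto_rsum hu).comp ?_).const_mul _
        have hd : (0 : ℝ) < d := by exact_mod_cast h0
        refine tendsto_nhdsWithin_iff.2 ⟨?_, ?_⟩
        · have : Tendsto (fun δ : ℝ => δ * d) (𝓝 0) (𝓝 0) :=
            (by fun_prop : Continuous fun δ : ℝ => δ * d).tendsto' _ _ (by simp)
          exact this.mono_left nhdsWithin_le_nhds
        · filter_upwards [self_mem_nhdsWithin] with δ hδ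
          exact mul_pos hδ hd
    · filter_upwards [self_mem_nhdsWithin] with δ hδ d
      have hδ : 0 < δ := hδ
      rcases Nat.eq_zero_or_pos d with rfl | h0
      · simp
      · have hd : (0 : ℝ) < d := by exact_mod_cast h0
        rw [norm_mul, norm_div, norm_pow, Complex.norm_natCast, mul_comm]
        have hm : ‖(μ d : ℂ)‖ ≤ 1 := by
          rw [Complex.norm_intCast]
          exact_mod_cast ArithmeticFunction.abs_moebius_le_one
        have := norm_rsum_le hC (mul_pos hδ hd)
        gcongr
  rw [tsum_mul_right, tsum_moebius] at hlim
  refine hlim.congr' ?_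
  filter_upwards [self_mem_nhdsWithin] with δ hδ
  exact (key δ hδ).symm

/-! ### Equidistribution of inverses modulo `n` -/

/-- A limit may be computed along uniformly close approximations whose limits are known. -/
lemma tendsto_of_approx {α E : Type*} [SeminormedAddCommGroup E] {l : Filter α} {F : α → E} {a : E}
    (h : ∀ η > 0, ∃ (F' : α → E) (a' : E), Tendsto F' l (𝓝 a') ∧ ‖a' - a‖ ≤ η ∧
      ∀ᶠ x in l, ‖F x - F' x‖ ≤ η) : Tendsto F l (𝓝 a) := by
  rw [Metric.tendsto_nhds]
  intro η hη
  obtain ⟨F', a', h1, h2, h3⟩ := h (η / 4) (by positivity)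
  rw [Metric.tendsto_nhds] at h1
  filter_upwards [h3, h1 (η / 4) (by positivity)] with x hx hx'
  rw [dist_eq_norm] at hx' ⊢
  calc ‖F x - a‖ = ‖(F x - F' x) + (F' x - a') + (a' - a)‖ := by congr 1; abel
    _ ≤ ‖F x - F' x‖ + ‖F' x - a'‖ + ‖a' - a‖ := norm_add₃_le
    _ < η := by linarith

/-- The weighted sum over the coprime pairs `(n, b)` with `n ≤ 1 / δ`, twisted by the Fourier mode
`e(m b / n)`, of the values of `Ψ` at `(δ n, b⁻¹ / n)`. -/
noncomputable def Lam (m : ℤ) (Ψ : ℝ → ℝ → ℂ) (δ : ℝ) : ℂ :=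
  ∑ n ∈ Finset.Ioc 0 ⌊1 / δ⌋₊, ((δ / n : ℝ) : ℂ) *
    ∑ b ∈ (Finset.range n).filter (fun b => n.Coprime b),
      ee (m * b / n) * Ψ (δ * n) (invMod n b / n)

lemma Lam_add (m : ℤ) (Ψ Ψ' : ℝ → ℝ → ℂ) (δ : ℝ) :
    Lam m (fun t y => Ψ t y + Ψ' t y) δ = Lam m Ψ δ + Lam m Ψ' δ := by
  simp only [Lam, mul_add, Finset.sum_add_distrib]

lemma Lam_smul (m : ℤ) (c : ℂ) (Ψ : ℝ → ℝ → ℂ) (δ : ℝ) :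
    Lam m (fun t y => c * Ψ t y) δ = c * Lam m Ψ δ := by
  simp only [Lam, Finset.mul_sum]
  exact Finset.sum_congr rfl fun n _ => Finset.sum_congr rfl fun b _ => by ring

lemma Lam_sub (m : ℤ) (Ψ Ψ' : ℝ → ℝ → ℂ) (δ : ℝ) :
    Lam m (fun t y => Ψ t y - Ψ' t y) δ = Lam m Ψ δ - Lam m Ψ' δ := by
  simp only [Lam, mul_sub, Finset.sum_sub_distrib]

lemma invMod_div_mem {n : ℕ} (hn : 0 < n) (b : ℕ) :
    (invMod n b / n : ℝ) ∈ Ico (0 : ℝ) 1 := by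
  have : NeZero n := ⟨hn.ne'⟩
  have h : invMod n b < n := ZMod.val_lt _
  have hn' : (0 : ℝ) < n := by exact_mod_cast hn
  refine ⟨by positivity, ?_⟩
  rw [div_lt_one hn']
  exact_mod_cast h

lemma norm_Lam_inner_le {m : ℤ} {u : ℝ → ℂ} {C : ℝ} (n : ℕ) (hn : 0 < n)
    (h : ∀ y ∈ Ico (0 : ℝ) 1, ‖u y‖ ≤ C) :
    ‖∑ b ∈ (Finset.range n).filter (fun b => n.Coprime b),
      ee (m * b / n) * u (invMod n b / n)‖ ≤ n * C := by
  have hC0 : 0 ≤ C := (norm_nonneg _).trans (h 0 (by simp))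
  refine (norm_sum_le_of_le (n := fun _ => C) _ fun b _ => ?_).trans ?_
  · rw [norm_mul, norm_ee, one_mul]
    exact h _ (invMod_div_mem hn b)
  · rw [Finset.sum_const, nsmul_eq_mul]
    gcongr
    exact (Finset.card_filter_le _ _).trans (by simp)

lemma norm_Lam_le_sum {m : ℤ} {Ψ : ℝ → ℝ → ℂ} {C : ℕ → ℝ} {δ : ℝ} (hδ : 0 < δ)
    (h : ∀ n ∈ Finset.Ioc 0 ⌊1 / δ⌋₊, ∀ y ∈ Ico (0 : ℝ) 1, ‖Ψ (δ * n) y‖ ≤ C n) :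
    ‖Lam m Ψ δ‖ ≤ δ * ∑ n ∈ Finset.Ioc 0 ⌊1 / δ⌋₊, C n := by
  rw [Lam, Finset.mul_sum]
  refine norm_sum_le_of_le _ fun n hn => ?_
  have hn0 := (Finset.mem_Ioc.1 hn).1
  have hn' : (0 : ℝ) < n := by exact_mod_cast hn0
  rw [norm_mul, Complex.norm_real, Real.norm_of_nonneg (by positivity)]
  calc _ ≤ δ / n * (n * C n) := by
        gcongr
        exact norm_Lam_inner_le n hn0 (h n hn)
    _ = δ * C n := by field_simp

lemma norm_Lam_le {m : ℤ} {Ψ : ℝ → ℝ → ℂ} {C : ℝ} {δ : ℝ} (hδ : 0 < δ)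
    (h : ∀ t ∈ Ioc (0 : ℝ) 1, ∀ y ∈ Ico (0 : ℝ) 1, ‖Ψ t y‖ ≤ C) : ‖Lam m Ψ δ‖ ≤ C := by
  have hC0 : 0 ≤ C := (norm_nonneg _).trans (h 1 (by simp) 0 (by simp))
  refine (norm_Lam_le_sum (C := fun _ => C) hδ fun n hn => h _ (mul_mem_of_mem hδ hn)).trans ?_
  rw [Finset.sum_const, Nat.card_Ioc, tsub_zero, nsmul_eq_mul]
  calc _ = (⌊1 / δ⌋₊ * δ) * C := by ring
    _ ≤ 1 * C := by gcongr; exact floor_mul_le hδ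
    _ = C := one_mul C

lemma tendsto_floor_inv : Tendsto (fun δ : ℝ => ⌊1 / δ⌋₊) (𝓝[>] 0) atTop := by
  simp only [one_div]
  exact tendsto_nat_floor_atTop.comp tendsto_inv_nhdsGT_zero

/-- For a pure Fourier mode in `y` the inner sum of `Lam` is a Kloosterman sum. -/
lemma Lam_exp (m j : ℤ) (u : ℝ → ℂ) (δ : ℝ) :
    Lam m (fun t y => u t * ee (j * y)) δ =
      ∑ n ∈ Finset.Ioc 0 ⌊1 / δ⌋₊, ((δ / n : ℝ) : ℂ) * (kl m j n * u (δ * n)) := by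
  rw [Lam]
  refine Finset.sum_congr rfl fun n _ => ?_
  rw [kl, Finset.sum_mul]
  congr 1
  refine Finset.sum_congr rfl fun b _ => ?_
  rw [mul_div_assoc (j : ℝ)]
  ring

/-- Nontrivial Fourier modes vanish in the limit because Kloosterman sums are `o(n)`. -/
lemma tendsto_Lam_exp_zero (m j : ℤ) (h : m ≠ 0 ∨ j ≠ 0) {u : ℝ → ℂ} (hu : Continuous u) :
    Tendsto (Lam m (fun t y => u t * ee (j * y))) (𝓝[>] 0) (𝓝 0) := by
  obtain ⟨C, hC⟩ := (isCompact_Icc (a := (0 : ℝ)) (b := 1)).exists_bound_of_continuousOn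
    hu.continuousOn
  have hC0 : 0 ≤ C := (norm_nonneg _).trans (hC 0 (by simp))
  have h1 : Tendsto (fun n : ℕ => ((n : ℝ))⁻¹ *
      ∑ i ∈ Finset.range n, ‖kl m j (i + 1)‖ / ((i + 1 : ℕ) : ℝ)) atTop (𝓝 0) :=
    ((tendsto_add_atTop_iff_nat 1).2 (kl_tendsto m j h)).cesaro
  have h2 := (h1.comp tendsto_floor_inv).const_mul C
  rw [mul_zero] at h2
  refine squeeze_zero_norm' ?_ h2
  filter_upwards [self_mem_nhdsWithin] with δ hδ
  have hδ : 0 < δ := hδ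
  rw [Lam_exp]
  refine (norm_sum_le_of_le _
    (n := fun n : ℕ => C * (δ * (‖kl m j n‖ / (n : ℝ)))) fun n hn => ?_).trans ?_
  · have hm := mul_mem_of_mem hδ hn
    rw [norm_mul, Complex.norm_real, Real.norm_of_nonneg (by positivity), norm_mul]
    have := hC _ ⟨hm.1.le, hm.2⟩
    calc δ / n * (‖kl m j n‖ * ‖u (δ * n)‖) ≤ δ / n * (‖kl m j n‖ * C) := by gcongr
      _ = _ := by ring
  · rw [← Finset.mul_sum, ← Finset.mul_sum, sum_Ioc_zero]
    simp only [Function.comp]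
    refine mul_le_mul_of_nonneg_left ?_ hC0
    rcases Nat.eq_zero_or_pos ⌊1 / δ⌋₊ with h0 | h0
    · rw [h0]
      simp
    · refine mul_le_mul_of_nonneg_right ?_ (Finset.sum_nonneg fun i _ => by positivity)
      rw [le_inv_comm₀ hδ (by exact_mod_cast h0), ← one_div]
      exact Nat.floor_le (by positivity)

/-- The trivial Fourier mode is the mean value of the totient function. -/
lemma tendsto_Lam_exp {u : ℝ → ℂ} (hu : Continuous u) :
    Tendsto (Lam 0 (fun t y => u t * ee ((0 : ℤ) * y))) (𝓝[>] 0)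
      (𝓝 (1 / (zeta2 : ℂ) * ∫ t in (0 : ℝ)..1, u t)) := by
  refine (tendsto_totient_sum hu).congr fun δ => ?_
  rw [Lam_exp]
  refine Finset.sum_congr rfl fun n _ => ?_
  have : kl 0 0 n = n.totient := by
    simp [kl, ee, Nat.totient]
  rw [this]

lemma integral_ee {j : ℤ} (hj : j ≠ 0) : ∫ y in (0 : ℝ)..1, ee (j * y) = 0 := by
  have hc : (2 * π * Complex.I * j : ℂ) ≠ 0 := by
    have : (j : ℂ) ≠ 0 := by exact_mod_cast hj
    simp [this, Real.pi_ne_zero]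
  have : ∀ y : ℝ, ee (j * y) = Complex.exp ((2 * π * Complex.I * j) * y) := by
    intro y; rw [ee]; push_cast; ring_nf
  simp only [this]
  rw [integral_exp_mul_complex hc]
  have e : (2 * π * Complex.I * j * (1 : ℝ) : ℂ) = j * (2 * π * Complex.I) := by push_cast; ring
  rw [e, Complex.exp_int_mul_two_pi_mul_I]
  simp

/-- The limit of `Lam m Ψ δ` as `δ → 0`: the mean of `Ψ` over the unit square times `1 / ζ(2)` for the
trivial mode `m = 0`, and zero otherwise. -/
noncomputable def Lim (m : ℤ) (Ψ : ℝ → ℝ → ℂ) : ℂ :=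
  (if m = 0 then 1 / (zeta2 : ℂ) else 0) * ∫ t in (0 : ℝ)..1, ∫ y in (0 : ℝ)..1, Ψ t y

lemma tendsto_Lam_mul_exp (m j : ℤ) {u : ℝ → ℂ} (hu : Continuous u) :
    Tendsto (Lam m (fun t y => u t * ee (j * y))) (𝓝[>] 0)
      (𝓝 (Lim m (fun t y => u t * ee (j * y)))) := by
  by_cases h : m ≠ 0 ∨ j ≠ 0
  · convert tendsto_Lam_exp_zero m j h hu
    rw [Lim]
    rcases h with h | h
    · simp [h]
    · simp [integral_ee h]
  · push Not at h
    obtain ⟨rfl, rfl⟩ := h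
    convert tendsto_Lam_exp hu
    rw [Lim]
    simp [ee]

/-- The function of two real variables, periodic in `y`, associated with a function on
`[0, 1] × ℝ/ℤ`; the variable `t` is projected to `[0, 1]`. -/
noncomputable def lift (Φ : C(unitInterval × UnitAddCircle, ℂ)) (t y : ℝ) : ℂ :=
  Φ (projIcc 0 1 zero_le_one t, (y : UnitAddCircle))

lemma continuous_lift (Φ : C(unitInterval × UnitAddCircle, ℂ)) :
    Continuous (Function.uncurry (lift Φ)) := by
  refine Φ.continuous.comp ?_
  exact (continuous_projIcc.comp continuous_fst).prodMk
    ((AddCircle.continuous_mk' 1).comp continuous_snd)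

lemma continuous_lift_integral (Φ : C(unitInterval × UnitAddCircle, ℂ)) :
    Continuous fun t => ∫ y in (0 : ℝ)..1, lift Φ t y :=
  intervalIntegral.continuous_parametric_intervalIntegral_of_continuous' (continuous_lift Φ) 0 1

lemma continuous_lift_right (Φ : C(unitInterval × UnitAddCircle, ℂ)) (t : ℝ) :
    Continuous (lift Φ t) :=
  (continuous_lift Φ).comp (continuous_const.prodMk continuous_id)

lemma Lim_add (m : ℤ) (Φ Φ' : C(unitInterval × UnitAddCircle, ℂ)) :
    Lim m (lift (Φ + Φ')) = Lim m (lift Φ) + Lim m (lift Φ') := by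
  rw [Lim, Lim, Lim, ← mul_add, ← intervalIntegral.integral_add
    ((continuous_lift_integral _).intervalIntegrable _ _)
    ((continuous_lift_integral _).intervalIntegrable _ _)]
  congr 2
  ext t
  rw [← intervalIntegral.integral_add ((continuous_lift_right _ _).intervalIntegrable _ _)
    ((continuous_lift_right _ _).intervalIntegrable _ _)]
  rfl

lemma Lim_smul (m : ℤ) (c : ℂ) (Φ : C(unitInterval × UnitAddCircle, ℂ)) :
    Lim m (lift (c • Φ)) = c * Lim m (lift Φ) := by
  have : ∀ t y, lift (c • Φ) t y = c * lift Φ t y := fun _ _ => rfl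
  simp only [Lim, this, intervalIntegral.integral_const_mul]
  ring

lemma one_le_zeta2 : 1 ≤ zeta2 := by
  have := Real.pi_gt_three
  unfold zeta2
  nlinarith

lemma norm_Lim_le {m : ℤ} {Ψ : ℝ → ℝ → ℂ} {C : ℝ} (h : ∀ t y, ‖Ψ t y‖ ≤ C) :
    ‖Lim m Ψ‖ ≤ C := by
  have hC0 : 0 ≤ C := (norm_nonneg _).trans (h 0 0)
  have h1 : ∀ t, ‖∫ y in (0 : ℝ)..1, Ψ t y‖ ≤ C := fun t => by
    simpa using intervalIntegral.norm_integral_le_of_norm_le_const (a := 0) (b := 1)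
      (fun y _ => h t y)
  have h2 : ‖∫ t in (0 : ℝ)..1, ∫ y in (0 : ℝ)..1, Ψ t y‖ ≤ C := by
    simpa using intervalIntegral.norm_integral_le_of_norm_le_const (a := 0) (b := 1)
      (fun t _ => h1 t)
  rw [Lim, norm_mul]
  have h3 : ‖(if m = 0 then 1 / (zeta2 : ℂ) else 0)‖ ≤ 1 := by
    split_ifs
    · rw [norm_div, norm_one, Complex.norm_real, Real.norm_of_nonneg
        (zero_le_one.trans one_le_zeta2)]
      exact div_le_one_of_le₀ one_le_zeta2 (zero_le_one.trans one_le_zeta2)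
    · simp
  calc _ ≤ 1 * C := mul_le_mul h3 h2 (norm_nonneg _) zero_le_one
    _ = C := one_mul C

/-- The functions `u(t) e(jy)` form a submonoid of the continuous functions. -/
def expMonoid : Submonoid C(unitInterval × UnitAddCircle, ℂ) where
  carrier := {Φ | ∃ (u : C(unitInterval, ℂ)) (j : ℤ), ∀ p, Φ p = u p.1 * fourier j p.2}
  one_mem' := ⟨1, 0, fun p => by simp⟩
  mul_mem' := by
    rintro Φ Φ' ⟨u, j, h⟩ ⟨u', j', h'⟩
    refine ⟨u * u', j + j', fun p => ?_⟩
    rw [ContinuousMap.mul_apply, h, h', fourier_add, ContinuousMap.mul_apply]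
    ring

lemma star_mem_expMonoid {Φ : C(unitInterval × UnitAddCircle, ℂ)} (h : Φ ∈ expMonoid) :
    star Φ ∈ expMonoid := by
  obtain ⟨u, j, h⟩ := h
  refine ⟨star u, -j, fun p => ?_⟩
  rw [ContinuousMap.star_apply, h, star_mul', fourier_neg]
  rfl

lemma lift_expMonoid {Φ : C(unitInterval × UnitAddCircle, ℂ)} (h : Φ ∈ expMonoid) :
    ∃ (u : ℝ → ℂ) (j : ℤ), Continuous u ∧ lift Φ = fun t y => u t * ee (j * y) := by
  obtain ⟨u, j, h⟩ := h
  refine ⟨fun t => u (projIcc 0 1 zero_le_one t), j, u.continuous.comp continuous_projIcc, ?_⟩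
  ext t y
  rw [lift, h, fourier_coe_apply, ee]
  congr 2
  push_cast
  ring

/-- The products `u(t) e(jy)` span a dense subspace, by the Stone–Weierstrass theorem. -/
lemma span_expMonoid_dense (Φ : C(unitInterval × UnitAddCircle, ℂ)) :
    Φ ∈ closure (Submodule.span ℂ (expMonoid : Set C(unitInterval × UnitAddCircle, ℂ)) :
      Set C(unitInterval × UnitAddCircle, ℂ)) := by
  set A := StarAlgebra.adjoin ℂ (expMonoid : Set C(unitInterval × UnitAddCircle, ℂ)) with hA
  have hs : A.SeparatesPoints := by
    intro p q hpq
    by_cases h1 : p.1 = q.1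
    · have h2 : p.2 ≠ q.2 := fun h => hpq (Prod.ext h1 h)
      refine ⟨_, ⟨(fourier 1).comp ContinuousMap.snd, StarAlgebra.subset_adjoin _ _ ?_, rfl⟩, ?_⟩
      · exact ⟨1, 1, fun p => by simp⟩
      · intro h
        refine h2 ?_
        have := AddCircle.injective_toCircle (T := 1) one_ne_zero
        refine this (Circle.ext ?_)
        simpa [fourier_one] using h
    · refine ⟨_, ⟨(ContinuousMap.mk (fun t : unitInterval => ((t : ℝ) : ℂ))
        (by fun_prop)).comp ContinuousMap.fst, StarAlgebra.subset_adjoin _ _ ?_, rfl⟩, ?_⟩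
      · exact ⟨ContinuousMap.mk (fun t : unitInterval => ((t : ℝ) : ℂ))
          (by fun_prop), 0, fun p => by simp⟩
      · intro h
        refine h1 (Subtype.ext ?_)
        simpa using h
  have h1 := ContinuousMap.starSubalgebra_topologicalClosure_eq_top_of_separatesPoints A hs
  have h2 : Φ ∈ closure (A : Set C(unitInterval × UnitAddCircle, ℂ)) := by
    rw [← StarSubalgebra.topologicalClosure_coe, h1]
    trivial
  refine closure_mono ?_ h2
  intro x hx
  have hx' : x ∈ Subalgebra.toSubmodule A.toSubalgebra := hx
  rw [hA, StarAlgebra.adjoin_eq_span] at hx'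
  refine Submodule.span_mono ?_ hx'
  have : Submonoid.closure ((expMonoid : Set C(unitInterval × UnitAddCircle, ℂ)) ∪
      star (expMonoid : Set C(unitInterval × UnitAddCircle, ℂ))) ≤ expMonoid := by
    rw [Submonoid.closure_le]
    rintro y (hy | hy)
    · exact hy
    · have := star_mem_expMonoid (Φ := star y) hy
      rwa [star_star] at this
  exact this

/-- Joint equidistribution of `δ n`, `b⁻¹ / n` and `b / n` over coprime pairs `(n, b)`, tested against
`Ψ(t, y) e(m x)`. -/
lemma tendsto_Lam_lift (m : ℤ) (Φ : C(unitInterval × UnitAddCircle, ℂ)) :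
    Tendsto (Lam m (lift Φ)) (𝓝[>] 0) (𝓝 (Lim m (lift Φ))) := by
  have hspan : ∀ Φ ∈ Submodule.span ℂ (expMonoid : Set C(unitInterval × UnitAddCircle, ℂ)),
      Tendsto (Lam m (lift Φ)) (𝓝[>] 0) (𝓝 (Lim m (lift Φ))) := by
    intro Φ hΦ
    induction hΦ using Submodule.span_induction with
    | mem x hx =>
      obtain ⟨u, j, hu, e⟩ := lift_expMonoid hx
      rw [e]
      exact tendsto_Lam_mul_exp m j hu
    | zero =>
      have : lift (0 : C(unitInterval × UnitAddCircle, ℂ)) = fun _ _ => 0 := rfl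
      rw [this]
      have : Lam m (fun _ _ => 0) = fun _ => 0 := by ext δ; simp [Lam]
      rw [this]
      simp [Lim]
    | add x y _ _ hx hy =>
      rw [Lim_add]
      exact (hx.add hy).congr fun δ => (Lam_add m (lift x) (lift y) δ).symm
    | smul c x _ hx =>
      rw [Lim_smul]
      exact (hx.const_mul c).congr fun δ => (Lam_smul m c (lift x) δ).symm
  refine tendsto_of_approx fun η hη => ?_
  obtain ⟨Φ', h1, h2⟩ := Metric.mem_closure_iff.1 (span_expMonoid_dense Φ) η hη
  rw [dist_eq_norm] at h2
  refine ⟨_, _, hspan Φ' h1, ?_, ?_⟩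
  · have e : Lim m (lift Φ') - Lim m (lift Φ) = Lim m (lift (Φ' - Φ)) := by
      have := Lim_add m (Φ' - Φ) Φ
      rw [sub_add_cancel] at this
      rw [this, add_sub_cancel_right]
    rw [e]
    refine norm_Lim_le fun t y => ?_
    refine (ContinuousMap.norm_coe_le_norm _ _).trans ?_
    rw [norm_sub_rev]
    exact h2.le
  · filter_upwards [self_mem_nhdsWithin] with δ hδ
    rw [← Lam_sub]
    refine norm_Lam_le hδ fun t _ y _ => ?_
    exact (ContinuousMap.norm_coe_le_norm (Φ - Φ') _).trans h2.le

/-! ### The limiting density as an average over inverses -/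

/-- For `η = 0`, the fraction `min(1, (1 - t) / (t y))` of a half window that survives as a one-sided
neighbourhood of `b / n` on which `D = n`, in the variables `t = δ n` and `y = a / n` with `a` the
abscissa of the companion lattice vector. For `η > 0` the denominator is bounded below by `η`, which
makes the function continuous up to `t = 1`. -/
noncomputable def g (η t y : ℝ) : ℝ := (1 - t) / max (max (1 - t) (t * y)) η

/-- The sum of the contributions of the two sides of `b / n`, whose companion vectors have abscissae
`b⁻¹` and `n - b⁻¹`. -/
noncomputable def G (η t y : ℝ) : ℝ := g η t y + g η t (1 - y)

lemma g_mem {η t y : ℝ} (ht : t ≤ 1) : g η t y ∈ Icc (0 : ℝ) 1 := by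
  have h1 : 1 - t ≤ max (max (1 - t) (t * y)) η := (le_max_left _ _).trans (le_max_left _ _)
  have h0 : 0 ≤ 1 - t := by linarith
  exact ⟨div_nonneg h0 (h0.trans h1), div_le_one_of_le₀ h1 (h0.trans h1)⟩

lemma G_mem {η t y : ℝ} (ht : t ≤ 1) : G η t y ∈ Icc (0 : ℝ) 2 := by
  have h1 := g_mem (η := η) (y := y) ht
  have h2 := g_mem (η := η) (y := 1 - y) ht
  exact ⟨add_nonneg h1.1 h2.1, by rw [G]; linarith [h1.2, h2.2]⟩

lemma continuous_g {η : ℝ} (hη : 0 < η) : Continuous (Function.uncurry (g η)) := by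
  unfold Function.uncurry g
  refine Continuous.div (by fun_prop) (by fun_prop) fun p => ?_
  exact (hη.trans_le (le_max_right _ _)).ne'

lemma g_eq {η t y : ℝ} (hη : 0 ≤ η) (ht : t ≤ 1 - η) : g η t y = g 0 t y := by
  have h1 : η ≤ max (1 - t) (t * y) := le_trans (by linarith) (le_max_left _ _)
  rw [g, g, max_eq_left h1, max_eq_left (hη.trans h1)]

lemma G_eq {η t y : ℝ} (hη : 0 ≤ η) (ht : t ≤ 1 - η) : G η t y = G 0 t y := by
  rw [G, G, g_eq hη ht, g_eq hη ht]

/-- The symmetry `y ↦ 1 - y` lets `G` factor through the distance of `y` to the nearest integer. -/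
lemma G_norm {η t y : ℝ} (hy : y ∈ Icc (0 : ℝ) 1) : G η t ‖(y : UnitAddCircle)‖ = G η t y := by
  rw [UnitAddCircle.norm_eq, abs_sub_round_eq_min]
  rcases hy.2.eq_or_lt with rfl | h
  · simp [G, add_comm]
  · rw [Int.fract_eq_self.2 ⟨hy.1, h⟩]
    rcases min_choice y (1 - y) with h | h <;> rw [h]
    simp [G, add_comm]

/-- The function `f(t) G η t y` as a continuous function on `[0, 1] × ℝ/ℤ`. The circle variable enters
through its norm, see `G_norm`. -/
noncomputable def PhiG (f : ℝ → ℂ) (hf : Continuous f) (η : ℝ) (hη : 0 < η) :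
    C(unitInterval × UnitAddCircle, ℂ) where
  toFun p := f p.1 * (G η p.1 ‖p.2‖ : ℝ)
  continuous_toFun := by
    have h1 : Continuous fun p : unitInterval × UnitAddCircle => g η p.1 ‖p.2‖ :=
      (continuous_g hη).comp ((continuous_subtype_val.comp continuous_fst).prodMk
        (continuous_norm.comp continuous_snd))
    have h2 : Continuous fun p : unitInterval × UnitAddCircle => g η p.1 (1 - ‖p.2‖) :=
      (continuous_g hη).comp ((continuous_subtype_val.comp continuous_fst).prodMk
        (continuous_const.sub (continuous_norm.comp continuous_snd)))
    have h3 : Continuous fun p : unitInterval × UnitAddCircle => G η p.1 ‖p.2‖ := h1.add h2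
    fun_prop

lemma lift_PhiG {f : ℝ → ℂ} (hf : Continuous f) {η : ℝ} (hη : 0 < η) {t y : ℝ}
    (ht : t ∈ Icc (0 : ℝ) 1) (hy : y ∈ Icc (0 : ℝ) 1) :
    lift (PhiG f hf η hη) t y = f t * (G η t y : ℝ) := by
  rw [lift, projIcc_of_mem _ ht, ← G_norm hy]
  rfl

/-- The threshold `t y = 1 - t` lies in `[0, 1]` exactly when `t ≥ 1/2`; beyond it the integrand is
`(1 - t) / (t y)`, which produces the logarithm in `psi`. -/
lemma integral_g {t : ℝ} (ht : t ∈ Ioc (0 : ℝ) 1) :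
    IntervalIntegrable (g 0 t) volume 0 1 ∧ ∫ y in (0 : ℝ)..1, g 0 t y = zeta2 / 2 * hdens t := by
  have hz : zeta2 ≠ 0 := (zero_lt_one.trans_le one_le_zeta2).ne'
  rcases ht.2.eq_or_lt with rfl | h1
  · have : g 0 1 = fun _ => 0 := by ext y; simp [g]
    rw [this]
    norm_num [hdens, psi]
  have h1t : 0 < 1 - t := by linarith
  refine ⟨Continuous.intervalIntegrable ?_ _ _, ?_⟩
  · unfold g
    refine Continuous.div (by fun_prop) (by fun_prop) fun y => ?_
    exact (h1t.trans_le ((le_max_left _ _).trans (le_max_left _ _))).ne'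
  have hg1 : ∀ y, t * y ≤ 1 - t → g 0 t y = 1 := by
    intro y hy
    rw [g, max_eq_left hy, max_eq_left h1t.le, div_self h1t.ne']
  by_cases h2 : t ≤ 1 / 2
  · rw [hdens, if_pos h2]
    have : ∫ y in (0 : ℝ)..1, g 0 t y = ∫ y in (0 : ℝ)..1, (1 : ℝ) := by
      refine intervalIntegral.integral_congr fun y hy => hg1 y ?_
      rw [uIcc_of_le zero_le_one] at hy
      nlinarith [hy.1, hy.2, ht.1]
    rw [this]
    simp
    field_simp
  · rw [hdens, if_neg h2, if_pos ht.2]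
    push Not at h2
    set r := (1 - t) / t with hr
    have ht0 : 0 < t := ht.1
    have hr0 : 0 < r := by positivity
    have hr1 : r < 1 := by rw [hr, div_lt_one ht0]; linarith
    have hrt : t * r = 1 - t := by rw [hr]; field_simp
    have hcont : Continuous (g 0 t) := by
      unfold g
      refine Continuous.div (by fun_prop) (by fun_prop) fun y => ?_
      exact (h1t.trans_le ((le_max_left _ _).trans (le_max_left _ _))).ne'
    rw [← intervalIntegral.integral_add_adjacent_intervals (b := r)
      (hcont.intervalIntegrable _ _) (hcont.intervalIntegrable _ _)]
    have e1 : ∫ y in (0 : ℝ)..r, g 0 t y = ∫ y in (0 : ℝ)..r, (1 : ℝ) := by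
      refine intervalIntegral.integral_congr fun y hy => hg1 y ?_
      rw [uIcc_of_le hr0.le] at hy
      nlinarith [hy.1, hy.2, ht.1]
    have e2 : ∫ y in r..1, g 0 t y = ∫ y in r..1, r * y⁻¹ := by
      refine intervalIntegral.integral_congr fun y hy => ?_
      rw [uIcc_of_le hr1.le] at hy
      have hy0 : 0 < y := hr0.trans_le hy.1
      have : 1 - t ≤ t * y := by rw [← hrt]; gcongr; exact hy.1
      simp only [g]
      rw [max_eq_right this, max_eq_left (by positivity), hr]
      field_simp
    rw [e1, e2, intervalIntegral.integral_const_mul, integral_inv_of_pos hr0 zero_lt_one]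
    have e3 : (1 : ℝ) / r = t / (1 - t) := by rw [hr]; field_simp
    rw [e3, psi]
    simp only [intervalIntegral.integral_const, sub_zero, smul_eq_mul, mul_one]
    rw [← hr]
    field_simp

lemma integral_G {t : ℝ} (ht : t ∈ Ioc (0 : ℝ) 1) :
    ∫ y in (0 : ℝ)..1, G 0 t y = zeta2 * hdens t := by
  obtain ⟨h1, h2⟩ := integral_g ht
  have h3 : IntervalIntegrable (fun y => g 0 t (1 - y)) volume 0 1 := by
    have := h1.comp_sub_left 1
    simpa using this.symm
  have h4 : ∫ y in (0 : ℝ)..1, g 0 t (1 - y) = ∫ y in (0 : ℝ)..1, g 0 t y := by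
    rw [intervalIntegral.integral_comp_sub_left (fun y => g 0 t y)]
    simp
  simp only [G]
  rw [intervalIntegral.integral_add h1 h3, h4, h2]
  ring

lemma hdens_mem {t : ℝ} (ht : 0 < t) : hdens t ∈ Icc (0 : ℝ) 2 := by
  by_cases h1 : t ≤ 1
  · have h := integral_G ⟨ht, h1⟩
    have hz := one_le_zeta2
    have a : 0 ≤ ∫ y in (0 : ℝ)..1, G 0 t y :=
      intervalIntegral.integral_nonneg zero_le_one fun y _ => (G_mem h1).1
    have b : ‖∫ y in (0 : ℝ)..1, G 0 t y‖ ≤ 2 * |1 - 0| :=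
      intervalIntegral.norm_integral_le_of_norm_le_const fun y _ => by
        rw [Real.norm_of_nonneg (G_mem h1).1]
        exact (G_mem h1).2
    rw [Real.norm_of_nonneg a] at b
    norm_num at b
    rw [h] at a b
    have h0 : 0 ≤ hdens t := nonneg_of_mul_nonneg_right a (by linarith)
    exact ⟨h0, by nlinarith⟩
  · rw [hdens, if_neg (by linarith), if_neg h1]
    simp

lemma measurable_hdens : Measurable hdens := by
  unfold hdens psi
  refine Measurable.ite measurableSet_Iic measurable_const
    (Measurable.ite measurableSet_Iic ?_ measurable_const)
  fun_prop

lemma integrable_mul_hdens {f : ℝ → ℂ} (hf : Continuous f) :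
    IntervalIntegrable (fun t => f t * (hdens t : ℂ)) volume 0 1 := by
  have h1 : IntervalIntegrable (fun t => (hdens t : ℂ)) volume 0 1 := by
    rw [intervalIntegrable_iff, uIoc_of_le zero_le_one]
    refine Measure.integrableOn_of_bounded (M := 2) (by simp)
      (by
        have := measurable_hdens
        exact (Complex.measurable_ofReal.comp this).aestronglyMeasurable) ?_
    refine (ae_restrict_iff' measurableSet_Ioc).2 (ae_of_all _ fun t ht => ?_)
    rw [Complex.norm_real, Real.norm_of_nonneg (hdens_mem ht.1).1]
    exact (hdens_mem ht.1).2
  exact h1.continuousOn_mul hf.continuousOn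

/-- Equidistribution for the discontinuous weight `G 0`. It agrees with the continuous `G η` for
`t ≤ 1 - η`, and both are at most `2` on the remaining range, which contributes `O(η)`. -/
lemma tendsto_Lam_G (m : ℤ) {f : ℝ → ℂ} (hf : Continuous f) :
    Tendsto (Lam m (fun t y => f t * (G 0 t y : ℝ))) (𝓝[>] 0)
      (𝓝 (if m = 0 then ∫ t in (0 : ℝ)..1, f t * (hdens t : ℂ) else 0)) := by
  obtain ⟨C, hC⟩ := (isCompact_Icc (a := (0 : ℝ)) (b := 1)).exists_bound_of_continuousOn
    hf.continuousOn
  have hC0 : 0 ≤ C := (norm_nonneg _).trans (hC 0 (by simp))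
  refine tendsto_of_approx fun κ hκ => ?_
  obtain ⟨η, hη, hη1, hηκ⟩ : ∃ η : ℝ, 0 < η ∧ η ≤ 1 / 2 ∧ 4 * C * η ≤ κ / 2 := by
    refine ⟨min (1 / 2) (κ / (8 * (C + 1))), by positivity, min_le_left _ _, ?_⟩
    calc _ ≤ 4 * C * (κ / (8 * (C + 1))) := by gcongr; exact min_le_right _ _
      _ ≤ 4 * (C + 1) * (κ / (8 * (C + 1))) := by gcongr; linarith
      _ = κ / 2 := by field_simp; norm_num
  refine ⟨_, _, tendsto_Lam_lift m (PhiG f hf η hη), ?_, ?_⟩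
  · rw [Lim]
    split_ifs with hm
    swap
    · simpa using hκ.le
    set H : ℝ → ℂ := fun t => ∫ y in (0 : ℝ)..1, lift (PhiG f hf η hη) t y
    rw [← intervalIntegral.integral_const_mul]
    have hH : IntervalIntegrable (fun t => 1 / (zeta2 : ℂ) * H t) volume 0 1 :=
      (continuous_const.mul (continuous_lift_integral _)).intervalIntegrable _ _
    have hd := integrable_mul_hdens hf
    rw [← intervalIntegral.integral_sub hH hd]
    have hz : 0 < zeta2 := zero_lt_one.trans_le one_le_zeta2
    have hzc : (zeta2 : ℂ) ≠ 0 := by exact_mod_cast hz.ne'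
    have hHeq : ∀ t ∈ Ioc (0 : ℝ) 1, H t = f t * ((∫ y in (0 : ℝ)..1, G η t y : ℝ) : ℂ) := by
      intro t ht
      rw [← intervalIntegral.integral_ofReal, ← intervalIntegral.integral_const_mul]
      refine intervalIntegral.integral_congr fun y hy => ?_
      rw [uIcc_of_le zero_le_one] at hy
      exact lift_PhiG hf hη ⟨ht.1.le, ht.2⟩ hy
    have hi := hH.sub hd
    have hmem : 1 - η ∈ uIcc (0 : ℝ) 1 := by
      rw [uIcc_of_le zero_le_one]; constructor <;> linarith
    rw [← intervalIntegral.integral_add_adjacent_intervals (b := 1 - η)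
      (hi.mono_set (uIcc_subset_uIcc left_mem_uIcc hmem))
      (hi.mono_set (uIcc_subset_uIcc hmem right_mem_uIcc))]
    have z1 : ∫ t in (0 : ℝ)..(1 - η), (1 / (zeta2 : ℂ) * H t - f t * (hdens t : ℂ)) = 0 := by
      refine intervalIntegral.integral_zero_ae (ae_of_all _ fun t ht => ?_)
      rw [uIoc_of_le (by linarith)] at ht
      have ht1 : t ∈ Ioc (0 : ℝ) 1 := ⟨ht.1, by linarith [ht.2]⟩
      rw [hHeq t ht1]
      simp only [G_eq hη.le ht.2]
      rw [integral_G ht1]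
      push_cast
      field_simp
      ring
    have z2 : ‖∫ t in (1 - η)..1, (1 / (zeta2 : ℂ) * H t - f t * (hdens t : ℂ))‖ ≤
        (4 * C) * |1 - (1 - η)| := by
      refine intervalIntegral.norm_integral_le_of_norm_le_const fun t ht => ?_
      rw [uIoc_of_le (by linarith)] at ht
      have ht1 : t ∈ Ioc (0 : ℝ) 1 := ⟨by linarith [ht.1], ht.2⟩
      have hf' := hC t ⟨ht1.1.le, ht1.2⟩
      rw [hHeq t ht1]
      have hG : ‖((∫ y in (0 : ℝ)..1, G η t y : ℝ) : ℂ)‖ ≤ 2 := by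
        rw [Complex.norm_real]
        have : ‖∫ y in (0 : ℝ)..1, G η t y‖ ≤ 2 * |1 - 0| :=
          intervalIntegral.norm_integral_le_of_norm_le_const fun y _ => by
            rw [Real.norm_of_nonneg (G_mem ht1.2).1]
            exact (G_mem ht1.2).2
        simpa using this
      have hz' : ‖1 / (zeta2 : ℂ)‖ ≤ 1 := by
        rw [norm_div, norm_one, Complex.norm_real, Real.norm_of_nonneg hz.le]
        exact div_le_one_of_le₀ one_le_zeta2 hz.le
      have hh : ‖(hdens t : ℂ)‖ ≤ 2 := by
        rw [Complex.norm_real, Real.norm_of_nonneg (hdens_mem ht1.1).1]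
        exact (hdens_mem ht1.1).2
      refine (norm_sub_le _ _).trans ?_
      rw [norm_mul, norm_mul, norm_mul]
      calc _ ≤ 1 * (C * 2) + C * 2 := by gcongr
        _ = 4 * C := by ring
    rw [z1, zero_add]
    refine z2.trans ?_
    rw [abs_of_pos (by linarith)]
    linarith
  · have hsmall : ∀ᶠ δ : ℝ in 𝓝[>] 0, δ < η := by
      filter_upwards [Ioo_mem_nhdsGT hη] with δ hδ using hδ.2
    filter_upwards [self_mem_nhdsWithin, hsmall] with δ hδ hδη
    have hδ : 0 < δ := hδ
    rw [← Lam_sub]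
    set N := ⌊1 / δ⌋₊
    set M := ⌊(1 - η) / δ⌋₊
    refine (norm_Lam_le_sum (C := fun n => if n ∈ Finset.Ioc M N then 2 * C else 0) hδ
      fun n hn y hy => ?_).trans ?_
    · have ht := mul_mem_of_mem hδ hn
      rw [lift_PhiG hf hη ⟨ht.1.le, ht.2⟩ ⟨hy.1, hy.2.le⟩, ← mul_sub]
      split_ifs with hM
      · rw [norm_mul, mul_comm 2 C]
        have a := G_mem (η := 0) (y := y) ht.2
        have b := G_mem (η := η) (y := y) ht.2
        have := hC _ ⟨ht.1.le, ht.2⟩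
        rw [← Complex.ofReal_sub, Complex.norm_real]
        gcongr
        rw [Real.norm_eq_abs, abs_le]
        constructor <;> linarith [a.1, a.2, b.1, b.2]
      · have : n ≤ M := by
          by_contra h
          exact hM (Finset.mem_Ioc.2 ⟨not_le.1 h, (Finset.mem_Ioc.1 hn).2⟩)
        have h1 : (n : ℝ) ≤ (1 - η) / δ :=
          (Nat.le_floor_iff (div_nonneg (by linarith) hδ.le)).1 this
        rw [le_div_iff₀ hδ] at h1
        rw [G_eq hη.le (by linarith)]
        simp
    · rw [← Finset.sum_filter, Finset.sum_const, nsmul_eq_mul]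
      have hcard : ((((Finset.Ioc 0 N).filter (fun n => n ∈ Finset.Ioc M N)).card : ℕ) : ℝ) ≤
          N - M := by
        have : ((Finset.Ioc 0 N).filter (fun n => n ∈ Finset.Ioc M N)).card ≤
            (Finset.Ioc M N).card := Finset.card_le_card fun x hx => (Finset.mem_filter.1 hx).2
        rw [Nat.card_Ioc] at this
        have hMN : M ≤ N := Nat.floor_le_floor (by gcongr; linarith)
        rw [← Nat.cast_sub hMN]
        exact_mod_cast this
      have hN := floor_mul_le hδ
      have hM := Nat.lt_floor_add_one ((1 - η) / δ)
      rw [div_lt_iff₀ hδ] at hM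
      calc _ ≤ δ * ((N - M) * (2 * C)) := by gcongr
        _ = (N * δ - M * δ) * (2 * C) := by ring
        _ ≤ (2 * η) * (2 * C) := by gcongr; nlinarith
        _ ≤ κ := by linarith

/-! ### The first denominator approximating within a window -/

/-- The least `n ≥ 1` such that `nθ` is within `δ` of an integer; it exists whenever `δ > 0`. -/
noncomputable def DD (θ δ : ℝ) : ℕ := sInf {n : ℕ | 1 ≤ n ∧ ∃ b : ℤ, |n * θ - b| ≤ δ}

/-- Dirichlet approximation: some `n ≤ 1 / δ` brings `n θ` within `δ` of an integer. -/
lemma DD_nonempty (θ : ℝ) {δ : ℝ} (hδ : 0 < δ) :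
    ∃ n : ℕ, 1 ≤ n ∧ (n : ℝ) * δ ≤ max 1 δ ∧ ∃ b : ℤ, |n * θ - b| ≤ δ := by
  rcases le_or_gt 1 δ with h | h
  · refine ⟨1, le_rfl, by simp, round θ, ?_⟩
    have := abs_sub_round θ
    simp only [Nat.cast_one, one_mul]
    linarith
  · have hN : 0 < ⌊1 / δ⌋₊ := Nat.floor_pos.2 (by rw [le_div_iff₀ hδ]; linarith)
    obtain ⟨k, hk0, hk1, hk⟩ := Real.exists_nat_abs_mul_sub_round_le θ hN
    refine ⟨k, hk0, ?_, round (k * θ), hk.trans ?_⟩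
    · have h1 : (k : ℝ) ≤ ⌊1 / δ⌋₊ := by exact_mod_cast hk1
      have := floor_mul_le hδ
      refine le_trans ?_ (le_max_left _ _)
      calc _ ≤ (⌊1 / δ⌋₊ : ℝ) * δ := by gcongr
        _ ≤ 1 := this
    · rw [div_le_iff₀ (by positivity)]
      have := Nat.lt_floor_add_one (1 / δ)
      rw [div_lt_iff₀ hδ] at this
      linarith

lemma DD_spec (θ : ℝ) {δ : ℝ} (hδ : 0 < δ) :
    1 ≤ DD θ δ ∧ ∃ b : ℤ, |(DD θ δ : ℝ) * θ - b| ≤ δ := by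
  obtain ⟨n, h1, _, h2⟩ := DD_nonempty θ hδ
  exact Nat.sInf_mem (s := {n : ℕ | 1 ≤ n ∧ ∃ b : ℤ, |n * θ - b| ≤ δ}) ⟨n, h1, h2⟩

lemma DD_le {θ δ : ℝ} {n : ℕ} (hn : 1 ≤ n) {b : ℤ} (h : |n * θ - b| ≤ δ) : DD θ δ ≤ n :=
  Nat.sInf_le (s := {n : ℕ | 1 ≤ n ∧ ∃ b : ℤ, |n * θ - b| ≤ δ}) ⟨hn, b, h⟩

lemma DD_mul_le (θ : ℝ) {δ : ℝ} (hδ : 0 < δ) (hδ1 : δ ≤ 1) : (DD θ δ : ℝ) * δ ≤ 1 := by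
  obtain ⟨n, h1, h2, b, hb⟩ := DD_nonempty θ hδ
  rw [max_eq_left hδ1] at h2
  have : (DD θ δ : ℝ) ≤ n := by exact_mod_cast DD_le h1 hb
  calc _ ≤ (n : ℝ) * δ := by gcongr
    _ ≤ 1 := h2

lemma DD_anti (θ : ℝ) {δ δ' : ℝ} (hδ : 0 < δ) (h : δ ≤ δ') : DD θ δ' ≤ DD θ δ := by
  obtain ⟨h1, b, hb⟩ := DD_spec θ hδ
  exact DD_le h1 (hb.trans h)

lemma DD_neg (θ δ : ℝ) : DD (-θ) δ = DD θ δ := by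
  unfold DD
  congr 1
  ext n
  simp only [Set.mem_ofPred_eq]
  refine and_congr_right fun _ => ⟨fun ⟨b, h⟩ => ⟨-b, ?_⟩, fun ⟨b, h⟩ => ⟨-b, ?_⟩⟩ <;>
  · rw [← abs_neg]
    convert h using 2
    push_cast
    ring

/-- Given that `n` enters the window, it is the first to do so if and only if no smaller
denominator does. -/
lemma DD_eq_iff {θ δ : ℝ} (hδ : 0 < δ) {n : ℕ} (hn : 1 ≤ n) {b : ℤ} (hb : |n * θ - b| ≤ δ) :
    DD θ δ = n ↔ ∀ k : ℕ, 1 ≤ k → k < n → ∀ d : ℤ, δ < |k * θ - d| := by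
  constructor
  · intro h k hk hkn d
    by_contra! h'
    have := DD_le hk h'
    omega
  · intro h
    obtain ⟨h1, d, hd⟩ := DD_spec θ hδ
    refine le_antisymm (DD_le hn hb) ?_
    by_contra! h'
    exact (h _ h1 h' d).not_ge hd

lemma measurable_DD {δ : ℝ → ℝ} (hδ : Measurable δ) (hpos : ∀ θ, 0 < δ θ) :
    Measurable fun θ => DD θ (δ θ) := by
  refine measurable_of_Iic fun n => ?_
  have : (fun θ => DD θ (δ θ)) ⁻¹' Iic n =
      ⋃ k ∈ Finset.Icc 1 n, ⋃ b : ℤ, {θ | |(k : ℝ) * θ - b| ≤ δ θ} := by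
    ext θ
    simp only [mem_preimage, mem_Iic, mem_iUnion, Finset.mem_Icc, Set.mem_ofPred_eq]
    constructor
    · intro h
      obtain ⟨h1, b, hb⟩ := DD_spec θ (hpos θ)
      exact ⟨_, ⟨h1, h⟩, b, hb⟩
    · rintro ⟨k, ⟨h1, h2⟩, b, hb⟩
      exact (DD_le h1 hb).trans h2
  rw [this]
  refine Finset.measurableSet_biUnion _ fun k _ => MeasurableSet.iUnion fun b => ?_
  exact measurableSet_le (by fun_prop) hδ

/-- A common divisor of the first denominator and its numerator would give an earlier one. -/
lemma DD_coprime {θ δ : ℝ} {n : ℕ} (hn : 1 ≤ n) {b : ℤ} (hb : |n * θ - b| ≤ δ)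
    (h : DD θ δ = n) : IsCoprime (n : ℤ) b := by
  rw [Int.isCoprime_iff_gcd_eq_one]
  set d := Int.gcd n b with hd
  have hd0 : 0 < d := Int.gcd_pos_of_ne_zero_left _ (by omega)
  obtain ⟨k, hk⟩ : (d : ℤ) ∣ n := Int.gcd_dvd_left ..
  obtain ⟨c, hc⟩ : (d : ℤ) ∣ b := Int.gcd_dvd_right ..
  have hk0 : 0 < k := by
    by_contra! hk'
    have : (d : ℤ) * k ≤ 0 := mul_nonpos_of_nonneg_of_nonpos (by positivity) hk'
    omega
  lift k to ℕ using hk0.le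
  have hk1 : n = d * k := by exact_mod_cast hk
  have hle := DD_le (θ := θ) (δ := δ) (n := k) (b := c) (by omega) (by
    have e : (n : ℝ) * θ - b = d * (k * θ - c) := by
      have : (b : ℝ) = d * c := by exact_mod_cast hc
      rw [this, hk1]; push_cast; ring
    rw [e, abs_mul, Nat.abs_cast] at hb
    have : (1 : ℝ) ≤ d := by exact_mod_cast hd0
    calc _ = 1 * |(k : ℝ) * θ - c| := (one_mul _).symm
      _ ≤ d * |(k : ℝ) * θ - c| := by gcongr
      _ ≤ δ := hb)
  rw [h, hk1] at hle
  have : d ≤ 1 := by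
    by_contra! h'
    have : 0 < k := by omega
    nlinarith
  omega

/-- If `n` is the first denominator then the companion lattice vector `(a, c)`, of smaller abscissa,
lies outside the window. Here `n θ - b = s ≥ 0` and `n (a θ - c) = -(1 - a s)`, so this says
`1 - a s > δ n`. -/
lemma DD_core_left {θ δ : ℝ} {n a : ℕ} {b c : ℤ} (ha : 1 ≤ a) (han : a < n)
    (hc : (a : ℤ) * b + 1 = n * c) (hnδ : n * δ ≤ 1)
    (hs : n * θ - b ≤ δ) (h0 : 0 ≤ n * θ - b) (h : DD θ δ = n) :
    a * (n * θ - b) < 1 - δ * n := by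
  by_contra! h'
  have hn : (0 : ℝ) < n := by exact_mod_cast (by omega : 0 < n)
  have han' : (a : ℝ) ≤ n := by exact_mod_cast han.le
  have hc' : (a : ℝ) * b + 1 = n * c := by exact_mod_cast hc
  have := DD_le (θ := θ) (δ := δ) (b := c) ha (by
    have e : (a : ℝ) * θ - c = - ((1 - a * (n * θ - b)) / n) := by
      field_simp
      linear_combination hc'
    have h1 : (a : ℝ) * (n * θ - b) ≤ 1 := by
      calc _ ≤ n * (n * θ - b) := by gcongr
        _ ≤ n * δ := by gcongr
        _ ≤ 1 := hnδ
    rw [e, abs_neg, abs_of_nonneg (div_nonneg (by linarith) hn.le), div_le_iff₀ hn]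
    linarith)
  omega

/-- Conversely, if the companion vector `(a, c)` stays outside the window then `n` is the first
denominator: `(n, b)` and `(a, c)` form a basis of `ℤ²`, and in this basis every vector with smaller
positive abscissa is seen to lie outside as well. -/
lemma DD_core_right {θ δ : ℝ} (hδ : 0 < δ) {n a : ℕ} {b c : ℤ} (ha : 1 ≤ a) (han : a < n)
    (hc : (a : ℤ) * b + 1 = n * c)
    (hs : n * θ - b ≤ δ) (h0 : 0 ≤ n * θ - b) (h : a * (n * θ - b) < 1 - δ * n) :
    DD θ δ = n := by
  have hn : (0 : ℝ) < n := by exact_mod_cast (by omega : 0 < n)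
  rw [DD_eq_iff hδ (b := b) (by omega) (by rwa [abs_of_nonneg h0])]
  intro k hk hkn d
  have hc' : (a : ℝ) * b + 1 = n * c := by exact_mod_cast hc
  set s := n * θ - b with hsdef
  obtain ⟨v, hv⟩ : ∃ v, v = (1 - a * s) / n := ⟨_, rfl⟩
  have hvδ : δ < v := by rw [hv, lt_div_iff₀ hn]; linarith
  set x : ℤ := k * c - a * d
  set y : ℤ := n * d - b * k
  have hk' : (k : ℤ) = x * n + y * a := by
    simp only [x, y]
    linear_combination (k : ℤ) * hc
  have e : (k : ℝ) * θ - d = x * s - y * v := by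
    have : (n : ℝ) * v = 1 - a * s := by rw [hv]; field_simp
    have hx : (x : ℝ) = k * c - a * d := by simp [x]
    have hy : (y : ℝ) = n * d - b * k := by simp [y]
    have hv' : v = c - a * θ := by
      rw [hv]
      field_simp
      rw [hsdef]
      linear_combination hc'
    rw [hx, hy, hv', hsdef]
    linear_combination (k * θ - d) * hc'
  rw [e]
  -- With `(k, d) = x (n, b) + y (a, c)` the deviation is `x s - y v`, where `s ≥ 0` and `v > δ`.
  -- The bounds `0 < k < n` force `y ≠ 0` and forbid `x` and `y` of the same strict sign.
  rcases lt_trichotomy y 0 with hy | hy | hy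
  · rcases le_or_gt x 0 with hx | hx
    · have : x * n ≤ 0 := mul_nonpos_of_nonpos_of_nonneg hx (by positivity)
      have : y * a ≤ 0 := mul_nonpos_of_nonpos_of_nonneg hy.le (by positivity)
      omega
    · have hy' : (y : ℝ) ≤ -1 := by exact_mod_cast (by omega : y ≤ -1)
      have hx' : (0 : ℝ) ≤ x := by exact_mod_cast hx.le
      refine lt_of_lt_of_le ?_ (le_abs_self _)
      nlinarith [mul_nonneg hx' h0]
  · rw [hy, zero_mul, add_zero] at hk'
    have hd : (n : ℤ) ∣ k := ⟨x, by rw [hk']; ring⟩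
    have := Nat.le_of_dvd (by omega) (Int.natCast_dvd_natCast.1 hd)
    omega
  · rcases le_or_gt x 0 with hx | hx
    · have hy' : (1 : ℝ) ≤ y := by exact_mod_cast hy
      have hx' : (x : ℝ) ≤ 0 := by exact_mod_cast hx
      refine lt_of_lt_of_le ?_ (neg_le_abs _)
      nlinarith [mul_nonneg_of_nonpos_of_nonpos hx' (neg_nonpos.2 h0)]
    · nlinarith

/-! ### Level sets of the first denominator and twisted moments -/

lemma norm_ee_sub_le (x y : ℝ) : ‖ee x - ee y‖ ≤ 2 * π * |x - y| := by
  have e : ee x - ee y = ee y * (Complex.exp (Complex.I * ((2 * π * (x - y) : ℝ) : ℂ)) - 1) := by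
    rw [ee, ee, mul_sub, mul_one, ← Complex.exp_add]
    congr 2
    push_cast
    ring
  rw [e, norm_mul, norm_ee, one_mul]
  refine Real.norm_exp_I_mul_ofReal_sub_one_le.trans ?_
  rw [Real.norm_eq_abs, abs_mul, abs_of_pos (by positivity)]

lemma continuous_ee_mul (c : ℝ) : Continuous fun θ : ℝ => ee (c * θ) := by
  unfold ee
  fun_prop

/-- For `n ≥ 2` the representative of the inverse of `b` is positive, hence `n - b⁻¹` is also a legitimate
abscissa of a companion vector. -/
lemma invMod_spec {n b : ℕ} (hn : 2 ≤ n) (h : n.Coprime b) :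
    1 ≤ invMod n b ∧ invMod n b < n ∧ ∃ c : ℤ, (invMod n b : ℤ) * b = n * c + 1 := by
  have : NeZero n := ⟨by omega⟩
  have h1 : ((invMod n b : ℕ) : ZMod n) * b = 1 := by
    rw [invMod, ZMod.natCast_zmod_val, mul_comm]
    exact ZMod.coe_mul_inv_eq_one b h.symm
  have h2 : (n : ℤ) ∣ (invMod n b : ℤ) * b - 1 := by
    rw [← ZMod.intCast_zmod_eq_zero_iff_dvd]
    push_cast
    rw [h1, sub_self]
  obtain ⟨c, hc⟩ := h2
  refine ⟨?_, ZMod.val_lt _, c, by linarith⟩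
  by_contra! h0
  have h0 : invMod n b = 0 := by omega
  rw [h0] at h1
  have : Fact (1 < n) := ⟨by omega⟩
  simp at h1

/-- The parameters `θ` whose first denominator is `n`, with `n θ` near the integer `b`. -/
def hitSet (δ : ℝ) (n b : ℕ) : Set ℝ := {θ | DD θ δ = n ∧ |n * θ - b| ≤ δ}

lemma measurableSet_DD {δ : ℝ} (hδ : 0 < δ) (n : ℕ) : MeasurableSet {θ | DD θ δ = n} :=
  measurableSet_eq_fun (measurable_DD (δ := fun _ => δ) measurable_const fun _ => hδ)
    measurable_const

lemma measurableSet_hitSet {δ : ℝ} (hδ : 0 < δ) (n b : ℕ) : MeasurableSet (hitSet δ n b) :=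
  (measurableSet_DD hδ n).inter (measurableSet_le
    (by fun_prop : Measurable fun θ : ℝ => |n * θ - b|) measurable_const)

/-- Up to end points `hitSet` is an interval around `b / n`. Each side is cut either by the window
`|n θ - b| ≤ δ` or by the companion lattice vector, of abscissa `a` on the left and `n - a` on the right,
where `a` is the inverse of `b` modulo `n`. The left side is the right side for `-θ`. -/
lemma hitSet_interval {δ : ℝ} (hδ : 0 < δ) {n b : ℕ} (hn : 2 ≤ n) (hb : n.Coprime b)
    (hnδ : δ * n ≤ 1) :
    hitSet δ n b ⊆ Icc ((b - min δ ((1 - δ * n) / invMod n b)) / n)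
        ((b + min δ ((1 - δ * n) / ((n : ℝ) - invMod n b))) / n) ∧
      Ioo ((b - min δ ((1 - δ * n) / invMod n b)) / n)
        ((b + min δ ((1 - δ * n) / ((n : ℝ) - invMod n b))) / n) ⊆ hitSet δ n b := by
  obtain ⟨h1, h2, c, hc⟩ := invMod_spec hn hb
  set a := invMod n b
  have hn0 : (0 : ℝ) < n := by exact_mod_cast (by omega : 0 < n)
  have ha0 : (0 : ℝ) < a := by exact_mod_cast h1
  have han : (0 : ℝ) < n - a := by
    have : (a : ℝ) < n := by exact_mod_cast h2
    linarith
  have hcast : ((n - a : ℕ) : ℝ) = n - a := Nat.cast_sub h2.le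
  have hc1 : ((n - a : ℕ) : ℤ) * (b : ℤ) + 1 = n * (b - c) := by
    rw [Nat.cast_sub h2.le]
    linear_combination -hc
  have hc2 : (a : ℤ) * (-b : ℤ) + 1 = n * (-c) := by linear_combination -hc
  have hneg : ∀ θ : ℝ, (n : ℝ) * (-θ) - ((-(b : ℤ) : ℤ) : ℝ) = -(n * θ - b) := by
    intro θ; push_cast; ring
  have hpos0 : 0 ≤ 1 - δ * n := by linarith
  have hm1 : 0 ≤ min δ ((1 - δ * n) / a) := le_min hδ.le (by positivity)
  have hm2 : 0 ≤ min δ ((1 - δ * n) / ((n : ℝ) - a)) := le_min hδ.le (by positivity)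
  constructor
  · rintro θ ⟨hD, hθ⟩
    rw [abs_le] at hθ
    rw [mem_Icc, div_le_iff₀ hn0, le_div_iff₀ hn0]
    rcases le_total 0 (n * θ - b) with h0 | h0
    · have := DD_core_left (a := n - a) (b := (b : ℤ)) (by omega) (by omega) hc1
        (by linarith) (by exact_mod_cast hθ.2) (by exact_mod_cast h0) hD
      rw [hcast, Int.cast_natCast] at this
      constructor
      · linarith
      · have : n * θ - b ≤ min δ ((1 - δ * n) / ((n : ℝ) - a)) := by
          refine le_min hθ.2 ?_
          rw [le_div_iff₀ han]
          linarith
        linarith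
    · have := DD_core_left (θ := -θ) (δ := δ) (a := a) (b := (-b : ℤ)) h1 h2 hc2
        (by linarith) (by rw [hneg]; linarith) (by rw [hneg]; linarith) (by rwa [DD_neg])
      rw [hneg] at this
      constructor
      · have : -(n * θ - b) ≤ min δ ((1 - δ * n) / a) := by
          refine le_min (by linarith) ?_
          rw [le_div_iff₀ ha0]
          linarith
        linarith
      · linarith
  · rintro θ hθ
    rw [mem_Ioo, div_lt_iff₀ hn0, lt_div_iff₀ hn0] at hθ
    obtain ⟨hθ1, hθ2⟩ := hθ
    rcases le_total 0 (n * θ - b) with h0 | h0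
    · have h3 : n * θ - b < min δ ((1 - δ * n) / ((n : ℝ) - a)) := by linarith
      rw [lt_min_iff, lt_div_iff₀ han] at h3
      refine ⟨?_, by rw [abs_of_nonneg h0]; exact h3.1.le⟩
      refine DD_core_right hδ (a := n - a) (b := (b : ℤ)) (by omega) (by omega) hc1
        (by exact_mod_cast h3.1.le) (by exact_mod_cast h0) ?_
      rw [hcast, Int.cast_natCast]
      linarith
    · have h3 : -(n * θ - b) < min δ ((1 - δ * n) / a) := by linarith
      rw [lt_min_iff, lt_div_iff₀ ha0] at h3
      refine ⟨?_, by rw [abs_of_nonpos h0]; exact h3.1.le⟩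
      rw [← DD_neg]
      refine DD_core_right hδ (a := a) (b := (-b : ℤ)) h1 h2 hc2
        (by rw [hneg]; exact h3.1.le) (by rw [hneg]; linarith) ?_
      rw [hneg]
      linarith

/-- The half-length `min(δ, (1 - δ n) / A)` of the level interval in terms of `g`. -/
lemma g_min {δ A : ℝ} {n : ℕ} (hδ : 0 < δ) (hA : 0 < A) (h : δ * n ≤ 1) (hn : 0 < n) :
    δ * g 0 (δ * n) (A / n) = min δ ((1 - δ * n) / A) := by
  have hn0 : (0 : ℝ) < n := by exact_mod_cast hn
  have e : δ * n * (A / n) = δ * A := by field_simp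
  have h0 : 0 ≤ 1 - δ * n := by linarith
  rw [g, e, max_eq_left (h0.trans (le_max_left _ _))]
  rcases le_total (1 - δ * n) (δ * A) with h1 | h1
  · rw [max_eq_right h1, min_eq_right (by rw [div_le_iff₀ hA]; exact h1)]
    field_simp
  · have : 0 < 1 - δ * n := lt_of_lt_of_le (by positivity) h1
    rw [max_eq_left h1, min_eq_left (by rw [le_div_iff₀ hA]; exact h1), div_self this.ne', mul_one]

/-- To first order the integral of `e(mθ)` over `hitSet` is its length times the value at `b / n`. -/
lemma integral_hitSet {δ : ℝ} (hδ : 0 < δ) {n b : ℕ} (hn : 2 ≤ n) (hb : n.Coprime b)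
    (hnδ : δ * n ≤ 1) (m : ℤ) :
    ‖(∫ θ in hitSet δ n b, ee (m * θ)) -
      ((δ / n : ℝ) : ℂ) * (ee (m * b / n) * (G 0 (δ * n) (invMod n b / n) : ℝ))‖ ≤
      4 * π * |(m : ℝ)| * (δ / n) ^ 2 := by
  obtain ⟨h1, h2, -⟩ := invMod_spec hn hb
  obtain ⟨hs1, hs2⟩ := hitSet_interval hδ hn hb hnδ
  set a := invMod n b
  have hn0 : (0 : ℝ) < n := by exact_mod_cast (by omega : 0 < n)
  have ha0 : (0 : ℝ) < a := by exact_mod_cast h1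
  have han : (0 : ℝ) < n - a := by
    have : (a : ℝ) < n := by exact_mod_cast h2
    linarith
  have e1 := g_min hδ ha0 hnδ (by omega)
  have e2 := g_min hδ han hnδ (by omega)
  have e2' : ((n : ℝ) - a) / n = 1 - a / n := by field_simp
  rw [e2'] at e2
  have hpos0 : 0 ≤ 1 - δ * n := by linarith
  have hm1 : 0 ≤ min δ ((1 - δ * n) / a) := le_min hδ.le (by positivity)
  have hm2 : 0 ≤ min δ ((1 - δ * n) / ((n : ℝ) - a)) := le_min hδ.le (by positivity)
  have hm1' := min_le_left δ ((1 - δ * n) / a)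
  have hm2' := min_le_left δ ((1 - δ * n) / ((n : ℝ) - a))
  set p := min δ ((1 - δ * n) / a)
  set q := min δ ((1 - δ * n) / ((n : ℝ) - a))
  have hG : δ / n * G 0 (δ * n) (a / n) = (b + q) / n - (b - p) / n := by
    rw [G, ← e1, ← e2]; ring
  have hle : (b - p) / n ≤ (b + q) / n := by gcongr; linarith
  have hae : hitSet δ n b =ᵐ[volume] Icc ((b - p) / n) ((b + q) / n) := by
    refine (LE.le.eventuallyLE hs1).antisymm ?_
    exact (Ioo_ae_eq_Icc (μ := volume)).symm.le.trans (LE.le.eventuallyLE hs2)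
  rw [setIntegral_congr_set hae, integral_Icc_eq_integral_Ioc,
    ← intervalIntegral.integral_of_le hle]
  have e3 : ((δ / n : ℝ) : ℂ) * (ee (m * b / n) * (G 0 (δ * n) (a / n) : ℝ)) =
      ∫ θ in ((b - p) / n)..((b + q) / n), ee (m * b / n) := by
    rw [intervalIntegral.integral_const, ← hG, Complex.real_smul]
    push_cast
    ring
  rw [e3, ← intervalIntegral.integral_sub ((continuous_ee_mul _).intervalIntegrable _ _)
    (by simp)]
  refine (intervalIntegral.norm_integral_le_of_norm_le_const (C := 2 * π * (|(m : ℝ)| * (δ / n)))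
    fun θ hθ => ?_).trans ?_
  · rw [uIoc_of_le hle] at hθ
    refine (norm_ee_sub_le _ _).trans ?_
    have e4 : m * θ - m * b / n = m * (θ - b / n) := by ring
    rw [e4, abs_mul]
    gcongr
    have r1 : (b - p) / n = b / n - p / n := sub_div _ _ _
    have r2 : (b + q) / n = b / n + q / n := add_div _ _ _
    have r3 : p / n ≤ δ / n := by gcongr
    have r4 : q / n ≤ δ / n := by gcongr
    rw [abs_le]
    constructor <;> linarith [hθ.1, hθ.2]
  · have : |(b + q) / n - (b - p) / n| ≤ 2 * (δ / n) := by
      rw [abs_of_nonneg (by linarith)]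
      have : (b + q) / n - (b - p) / n = (q + p) / n := by ring
      rw [this, ← mul_div_assoc]
      gcongr
      linarith
    calc _ ≤ 2 * π * (|(m : ℝ)| * (δ / n)) * (2 * (δ / n)) := by gcongr
      _ = _ := by ring

/-- Only numerators coprime to `n` contribute to the level set. The restriction to `[0, 1)` picks
exactly the residues `0 ≤ b < n` because `n ≥ 2`. -/
lemma hitSet_union {δ : ℝ} (hδ : 0 < δ) (hδ2 : δ < 1 / 2) {n : ℕ} (hn : 2 ≤ n) :
    Ico (0 : ℝ) 1 ∩ {θ | DD θ δ = n} =
      ⋃ b ∈ (Finset.range n).filter (fun b => n.Coprime b), hitSet δ n b := by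
  have hn0 : (0 : ℝ) < n := by exact_mod_cast (by omega : 0 < n)
  have hn2 : (2 : ℝ) ≤ n := by exact_mod_cast hn
  ext θ
  simp only [mem_iUnion, Finset.mem_filter, Finset.mem_range, mem_inter_iff, mem_Ico,
    Set.mem_ofPred_eq, hitSet, exists_prop]
  constructor
  · rintro ⟨⟨h0, h1⟩, hD⟩
    obtain ⟨-, b, hb⟩ := DD_spec θ hδ
    rw [hD] at hb
    have hco := DD_coprime (by omega) hb hD
    rw [abs_le] at hb
    have hb0 : (-1 : ℝ) < b := by nlinarith
    have hb1 : (b : ℝ) < n + 1 := by nlinarith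
    have hb0' : 0 ≤ b := by
      have : (-1 : ℤ) < b := by exact_mod_cast hb0
      omega
    lift b to ℕ using hb0'
    have hco' : n.Coprime b := Nat.isCoprime_iff_coprime.1 hco
    have hb1' : b < n + 1 := by exact_mod_cast hb1
    have hbn : b ≠ n := by
      rintro rfl
      rw [Nat.coprime_self] at hco'
      omega
    exact ⟨b, ⟨by omega, hco'⟩, hD, abs_le.2 (by exact_mod_cast hb)⟩
  · rintro ⟨b, ⟨hb, hco⟩, hD, hθ⟩
    have hb0 : b ≠ 0 := by
      rintro rfl
      rw [Nat.coprime_zero_right] at hco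
      omega
    rw [abs_le] at hθ
    have hb1 : (1 : ℝ) ≤ b := by exact_mod_cast (by omega : 1 ≤ b)
    have hb2 : (b : ℝ) ≤ n - 1 := by
      have : (b : ℝ) + 1 ≤ n := by exact_mod_cast hb
      linarith
    refine ⟨⟨?_, ?_⟩, hD⟩
    · by_contra! h
      nlinarith
    · by_contra! h
      nlinarith

lemma hitSet_disjoint {δ : ℝ} (hδ2 : δ < 1 / 2) {n b b' : ℕ} (h : b ≠ b') :
    Disjoint (hitSet δ n b) (hitSet δ n b') := by
  rw [Set.disjoint_left]
  rintro θ ⟨-, h1⟩ ⟨-, h2⟩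
  refine h ?_
  rw [abs_le] at h1 h2
  have a1 : (b : ℝ) < b' + 1 := by linarith
  have a2 : (b' : ℝ) < b + 1 := by linarith
  have a1' : b < b' + 1 := by exact_mod_cast a1
  have a2' : b' < b + 1 := by exact_mod_cast a2
  omega

lemma integrableOn_ee (m : ℤ) {s : Set ℝ} (hs : s ⊆ Ico 0 1) :
    IntegrableOn (fun θ => ee (m * θ)) s := by
  have : IntegrableOn (fun θ => ee (m * θ)) (Icc 0 1) :=
    (continuous_ee_mul _).integrableOn_Icc
  exact this.mono_set (hs.trans Ico_subset_Icc_self)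

lemma integral_level {δ : ℝ} (hδ : 0 < δ) (hδ2 : δ < 1 / 2) {n : ℕ} (hn : 2 ≤ n)
    (hnδ : δ * n ≤ 1) (m : ℤ) :
    ‖(∫ θ in Ico (0 : ℝ) 1 ∩ {θ | DD θ δ = n}, ee (m * θ)) -
      ((δ / n : ℝ) : ℂ) * ∑ b ∈ (Finset.range n).filter (fun b => n.Coprime b),
        ee (m * b / n) * (G 0 (δ * n) (invMod n b / n) : ℝ)‖ ≤
      4 * π * |(m : ℝ)| * δ ^ 2 := by
  have hu := hitSet_union hδ hδ2 hn
  have hn1 : (1 : ℝ) ≤ n := by exact_mod_cast (by omega : 1 ≤ n)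
  have hsub : ∀ b ∈ (Finset.range n).filter (fun b => n.Coprime b), hitSet δ n b ⊆ Ico 0 1 := by
    intro b hb θ hθ
    have : θ ∈ Ico (0 : ℝ) 1 ∩ {θ | DD θ δ = n} := by
      rw [hu]
      exact mem_biUnion hb hθ
    exact this.1
  rw [hu, integral_biUnion_finset _ (fun b _ => measurableSet_hitSet hδ n b)
    (fun b _ b' _ h => hitSet_disjoint hδ2 h) (fun b hb => integrableOn_ee m (hsub b hb)),
    Finset.mul_sum, ← Finset.sum_sub_distrib]
  refine (norm_sum_le_of_le _ fun b hb =>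
    integral_hitSet hδ hn (Finset.mem_filter.1 hb).2 hnδ m).trans ?_
  rw [Finset.sum_const, nsmul_eq_mul]
  have hcard : (((Finset.range n).filter (fun b => n.Coprime b)).card : ℝ) ≤ n := by
    exact_mod_cast (Finset.card_filter_le _ _).trans (by simp)
  calc _ ≤ n * (4 * π * |(m : ℝ)| * (δ / n) ^ 2) := by gcongr
    _ = 4 * π * |(m : ℝ)| * δ ^ 2 / n := by field_simp
    _ ≤ _ := div_le_self (by positivity) hn1

/-- The level `n = 1`, where the formula of `integral_level` fails at the ends of `[0, 1)`, has
negligible measure. -/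
lemma integral_level_one {δ : ℝ} (hδ : 0 < δ) (hδ2 : δ < 1 / 2) (m : ℤ) :
    ‖∫ θ in Ico (0 : ℝ) 1 ∩ {θ | DD θ δ = 1}, ee (m * θ)‖ ≤ 2 * δ := by
  have hsub : Ico (0 : ℝ) 1 ∩ {θ | DD θ δ = 1} ⊆ Icc 0 δ ∪ Icc (1 - δ) 1 := by
    rintro θ ⟨⟨h0, h1⟩, hD⟩
    have hD : DD θ δ = 1 := hD
    obtain ⟨-, b, hb⟩ := DD_spec θ hδ
    rw [hD, Nat.cast_one, one_mul, abs_le] at hb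
    have hb0 : (-1 : ℝ) < b := by linarith
    have hb1 : (b : ℝ) < 2 := by linarith
    have hb0' : (-1 : ℤ) < b := by exact_mod_cast hb0
    have hb1' : b < 2 := by exact_mod_cast hb1
    have : b = 0 ∨ b = 1 := by omega
    rcases this with rfl | rfl
    · left
      norm_num at hb
      exact ⟨h0, hb.2⟩
    · right
      norm_num at hb
      exact ⟨by linarith, h1.le⟩
  have hvol : volume (Icc 0 δ ∪ Icc (1 - δ) 1) ≤ ENNReal.ofReal (2 * δ) := by
    refine (measure_union_le _ _).trans ?_
    rw [Real.volume_Icc, Real.volume_Icc, ← ENNReal.ofReal_add (by linarith) (by linarith)]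
    exact ENNReal.ofReal_le_ofReal (by linarith)
  have hlt := (measure_mono hsub).trans hvol
  refine (norm_setIntegral_le_of_norm_le_const (C := 1) (hlt.trans_lt ENNReal.ofReal_lt_top)
    fun θ _ => (norm_ee _).le).trans ?_
  rw [one_mul]
  exact ENNReal.toReal_le_of_le_ofReal (by positivity) hlt

/-- Twisted moments of `δ D(θ, δ)`: the mode `m = 0` gives the limiting distribution, and the vanishing of
the others expresses asymptotic independence from `θ`. -/
lemma tendsto_exp_DD (m : ℤ) {f : ℝ → ℂ} (hf : Continuous f) :
    Tendsto (fun δ : ℝ => ∫ θ in (0 : ℝ)..1, ee (m * θ) * f (δ * DD θ δ)) (𝓝[>] 0)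
      (𝓝 (if m = 0 then ∫ t in (0 : ℝ)..1, f t * (hdens t : ℂ) else 0)) := by
  obtain ⟨C, hC⟩ := (isCompact_Icc (a := (0 : ℝ)) (b := 1)).exists_bound_of_continuousOn
    hf.continuousOn
  have hC0 : 0 ≤ C := (norm_nonneg _).trans (hC 0 (by simp))
  have key : Tendsto (fun δ : ℝ => (∫ θ in (0 : ℝ)..1, ee (m * θ) * f (δ * DD θ δ)) -
      Lam m (fun t y => f t * (G 0 t y : ℝ)) δ) (𝓝[>] 0) (𝓝 0) := by
    have hlim : Tendsto (fun δ : ℝ => C * (4 * π * |(m : ℝ)| * δ + 4 * δ)) (𝓝[>] 0) (𝓝 0) :=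
      ((by fun_prop : Continuous fun δ : ℝ => C * (4 * π * |(m : ℝ)| * δ + 4 * δ)).tendsto' _ _
        (by simp)).mono_left nhdsWithin_le_nhds
    refine squeeze_zero_norm' ?_ hlim
    filter_upwards [Ioo_mem_nhdsGT (by norm_num : (0 : ℝ) < 1 / 2)] with δ hδ
    obtain ⟨hδ, hδ2⟩ := hδ
    set N := ⌊1 / δ⌋₊ with hN
    have hcover : Ico (0 : ℝ) 1 = ⋃ n ∈ Finset.Ioc 0 N, Ico (0 : ℝ) 1 ∩ {θ | DD θ δ = n} := by
      ext θ
      simp only [mem_iUnion, Finset.mem_Ioc, mem_inter_iff, Set.mem_ofPred_eq, exists_prop]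
      constructor
      · intro h
        refine ⟨DD θ δ, ⟨(DD_spec θ hδ).1, ?_⟩, h, rfl⟩
        rw [hN, Nat.le_floor_iff (by positivity), le_div_iff₀ hδ]
        exact DD_mul_le θ hδ (by linarith)
      · rintro ⟨n, -, h, -⟩
        exact h
    have hmeas : ∀ n, MeasurableSet (Ico (0 : ℝ) 1 ∩ {θ | DD θ δ = n}) := fun n =>
      measurableSet_Ico.inter (measurableSet_DD hδ n)
    have hlevel : ∀ n : ℕ, EqOn (fun θ => ee (m * θ) * f (δ * DD θ δ))
        (fun θ => ee (m * θ) * f (δ * n)) (Ico (0 : ℝ) 1 ∩ {θ | DD θ δ = n}) := by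
      rintro n θ ⟨-, h⟩
      have h : DD θ δ = n := h
      simp only [h]
    have e1 : ∫ θ in (0 : ℝ)..1, ee (m * θ) * f (δ * DD θ δ) =
        ∑ n ∈ Finset.Ioc 0 N, f (δ * n) *
          ∫ θ in Ico (0 : ℝ) 1 ∩ {θ | DD θ δ = n}, ee (m * θ) := by
      rw [intervalIntegral.integral_of_le zero_le_one, ← integral_Ico_eq_integral_Ioc]
      conv_lhs => rw [hcover]
      rw [integral_biUnion_finset _ (fun n _ => hmeas n)]
      · refine Finset.sum_congr rfl fun n _ => ?_
        rw [setIntegral_congr_fun (hmeas n) (hlevel n), integral_mul_const, mul_comm]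
      · intro n _ n' _ h
        refine Set.disjoint_left.2 ?_
        rintro θ ⟨-, h1⟩ ⟨-, h2⟩
        exact h (h1.symm.trans h2)
      · intro n _
        refine IntegrableOn.congr_fun ?_ (hlevel n).symm (hmeas n)
        exact (integrableOn_ee m inter_subset_left).mul_const _
    rw [e1, Lam, ← Finset.sum_sub_distrib]
    refine (norm_sum_le_of_le (n := fun n => C * (4 * π * |(m : ℝ)| * δ ^ 2) +
      if n = 1 then C * (4 * δ) else 0) _ fun n hn => ?_).trans ?_
    · have ht := mul_mem_of_mem hδ hn
      have hn0 := (Finset.mem_Ioc.1 hn).1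
      have e2 : ∑ b ∈ (Finset.range n).filter (fun b => n.Coprime b),
            ee (m * b / n) * (f (δ * n) * (G 0 (δ * n) (invMod n b / n) : ℝ)) =
          f (δ * n) * ∑ b ∈ (Finset.range n).filter (fun b => n.Coprime b),
            ee (m * b / n) * (G 0 (δ * n) (invMod n b / n) : ℝ) := by
        rw [Finset.mul_sum]
        exact Finset.sum_congr rfl fun b _ => by ring
      rw [e2, mul_left_comm, ← mul_sub, norm_mul]
      have hCf := hC _ ⟨ht.1.le, ht.2⟩
      rcases Nat.lt_or_ge n 2 with h2 | h2
      · obtain rfl : n = 1 := by omega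
        rw [if_pos rfl]
        have h3 := integral_level_one hδ hδ2 m
        have h4 : ‖((δ / (1 : ℕ) : ℝ) : ℂ) * ∑ b ∈ (Finset.range 1).filter
            (fun b => (1 : ℕ).Coprime b),
            ee (m * b / (1 : ℕ)) * (G 0 (δ * (1 : ℕ)) (invMod 1 b / (1 : ℕ)) : ℝ)‖ ≤ 2 * δ := by
          rw [norm_mul, Complex.norm_real, Nat.cast_one, div_one, Real.norm_of_nonneg hδ.le,
            mul_comm]
          have h6 := norm_Lam_inner_le (m := m) (u := fun y => ((G 0 (δ * (1 : ℕ)) y : ℝ) : ℂ))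
            (C := 2) 1 zero_lt_one (fun y _ => by
              have := G_mem (η := 0) (y := y) ht.2
              rw [Complex.norm_real, Real.norm_of_nonneg this.1]
              exact this.2)
          norm_num at h6 ⊢
          gcongr
        have h5 : 0 ≤ C * (4 * π * |(m : ℝ)| * δ ^ 2) := by positivity
        calc _ ≤ C * (2 * δ + 2 * δ) := by
              gcongr
              exact (norm_sub_le _ _).trans (add_le_add h3 h4)
          _ ≤ _ := by linarith
      · rw [if_neg (by omega), add_zero]
        gcongr
        exact integral_level hδ hδ2 h2 ht.2 m
    · rw [Finset.sum_add_distrib, Finset.sum_const, Nat.card_Ioc, nsmul_eq_mul, tsub_zero,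
        Finset.sum_ite_eq']
      have h1 : (if 1 ∈ Finset.Ioc 0 N then C * (4 * δ) else 0) ≤ C * (4 * δ) := by
        split_ifs
        · exact le_rfl
        · positivity
      have hNδ := floor_mul_le hδ
      calc _ ≤ (N * δ) * (C * (4 * π * |(m : ℝ)| * δ)) + C * (4 * δ) := by
            refine add_le_add (le_of_eq ?_) h1
            ring
        _ ≤ 1 * (C * (4 * π * |(m : ℝ)| * δ)) + C * (4 * δ) := by gcongr
        _ = _ := by ring
  have := key.add (tendsto_Lam_G m hf)
  simpa using this

/-! ### Weak convergence on a window of directions -/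

lemma DD_mem {δ : ℝ} (hδ : 0 < δ) (hδ1 : δ ≤ 1) (θ : ℝ) :
    δ * DD θ δ ∈ Icc (0 : ℝ) 1 :=
  ⟨by positivity, by rw [mul_comm]; exact DD_mul_le θ hδ hδ1⟩

lemma measurable_comp_DD {E : Type*} [TopologicalSpace E] [MeasurableSpace E] [BorelSpace E]
    {f : ℝ → E} (hf : Continuous f) {δ : ℝ} (hδ : 0 < δ) :
    Measurable fun θ => f (δ * DD θ δ) := by
  have h := measurable_DD (δ := fun _ => δ) measurable_const fun _ => hδ
  exact hf.measurable.comp (measurable_const.mul (measurable_from_nat.comp h))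

lemma intervalIntegrable_mul_DD {f : ℝ → ℂ} (hf : Continuous f) {δ : ℝ} (hδ : 0 < δ)
    (hδ1 : δ ≤ 1) {φ : ℝ → ℂ} {a b : ℝ} (hφ : IntervalIntegrable φ volume a b) :
    IntervalIntegrable (fun θ => φ θ * f (δ * DD θ δ)) volume a b := by
  obtain ⟨C, hC⟩ := (isCompact_Icc (a := (0 : ℝ)) (b := 1)).exists_bound_of_continuousOn
    hf.continuousOn
  rw [intervalIntegrable_iff] at hφ ⊢
  exact Integrable.mul_bdd (c := C) hφ (measurable_comp_DD hf hδ).aestronglyMeasurable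
    (ae_of_all _ fun θ => hC _ (DD_mem hδ hδ1 θ))

/-- The class of weights for which the asymptotic independence holds is closed in `L¹`. -/
lemma tendsto_DD_approx {f : ℝ → ℂ} (hf : Continuous f) (c : ℂ) {φ : ℝ → ℂ}
    (hφ : IntervalIntegrable φ volume 0 1)
    (h : ∀ η > 0, ∃ ψ : ℝ → ℂ, IntervalIntegrable ψ volume 0 1 ∧
      (∫ θ in (0 : ℝ)..1, ‖φ θ - ψ θ‖) ≤ η ∧
      Tendsto (fun δ : ℝ => ∫ θ in (0 : ℝ)..1, ψ θ * f (δ * DD θ δ)) (𝓝[>] 0)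
        (𝓝 ((∫ θ in (0 : ℝ)..1, ψ θ) * c))) :
    Tendsto (fun δ : ℝ => ∫ θ in (0 : ℝ)..1, φ θ * f (δ * DD θ δ)) (𝓝[>] 0)
      (𝓝 ((∫ θ in (0 : ℝ)..1, φ θ) * c)) := by
  obtain ⟨C, hC⟩ := (isCompact_Icc (a := (0 : ℝ)) (b := 1)).exists_bound_of_continuousOn
    hf.continuousOn
  have hC0 : 0 ≤ C := (norm_nonneg _).trans (hC 0 (by simp))
  refine tendsto_of_approx fun η hη => ?_
  obtain ⟨ψ, h1, h2, h3⟩ := h (η / (C + ‖c‖ + 1)) (by positivity)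
  have h4 : IntervalIntegrable (fun θ => ‖φ θ - ψ θ‖) volume 0 1 := (hφ.sub h1).norm
  refine ⟨_, _, h3, ?_, ?_⟩
  · rw [← sub_mul, norm_mul, norm_sub_rev, ← intervalIntegral.integral_sub hφ h1]
    calc _ ≤ (η / (C + ‖c‖ + 1)) * ‖c‖ := by
          gcongr
          exact (intervalIntegral.norm_integral_le_integral_norm zero_le_one).trans h2
      _ ≤ (η / (C + ‖c‖ + 1)) * (C + ‖c‖ + 1) := by gcongr; linarith
      _ = η := by field_simp
  · filter_upwards [Ioc_mem_nhdsGT zero_lt_one] with δ hδ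
    rw [← intervalIntegral.integral_sub (intervalIntegrable_mul_DD hf hδ.1 hδ.2 hφ)
      (intervalIntegrable_mul_DD hf hδ.1 hδ.2 h1)]
    calc _ ≤ ∫ θ in (0 : ℝ)..1, ‖φ θ - ψ θ‖ * C := by
          refine intervalIntegral.norm_integral_le_of_norm_le zero_le_one
            (ae_of_all _ fun θ _ => ?_) (h4.mul_const C)
          rw [← sub_mul, norm_mul]
          gcongr
          exact hC _ (DD_mem hδ.1 hδ.2 θ)
      _ ≤ (η / (C + ‖c‖ + 1)) * C := by
          rw [intervalIntegral.integral_mul_const]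
          gcongr
      _ ≤ (η / (C + ‖c‖ + 1)) * (C + ‖c‖ + 1) := by
          gcongr
          linarith [norm_nonneg c]
      _ = η := by field_simp

lemma tendsto_DD_circle {f : ℝ → ℂ} (hf : Continuous f) (Φ : C(UnitAddCircle, ℂ)) :
    Tendsto (fun δ : ℝ => ∫ θ in (0 : ℝ)..1, Φ (θ : UnitAddCircle) * f (δ * DD θ δ)) (𝓝[>] 0)
      (𝓝 ((∫ θ in (0 : ℝ)..1, Φ (θ : UnitAddCircle)) *
        ∫ t in (0 : ℝ)..1, f t * (hdens t : ℂ))) := by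
  have hcont : ∀ Φ : C(UnitAddCircle, ℂ), Continuous fun θ : ℝ => Φ (θ : UnitAddCircle) :=
    fun Φ => Φ.continuous.comp (AddCircle.continuous_mk' 1)
  have hint : ∀ Φ : C(UnitAddCircle, ℂ),
      IntervalIntegrable (fun θ : ℝ => Φ (θ : UnitAddCircle)) volume 0 1 :=
    fun Φ => (hcont Φ).intervalIntegrable _ _
  have hspan : ∀ Φ ∈ Submodule.span ℂ (range (fourier (T := 1))),
      Tendsto (fun δ : ℝ => ∫ θ in (0 : ℝ)..1, Φ (θ : UnitAddCircle) * f (δ * DD θ δ)) (𝓝[>] 0)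
      (𝓝 ((∫ θ in (0 : ℝ)..1, Φ (θ : UnitAddCircle)) *
        ∫ t in (0 : ℝ)..1, f t * (hdens t : ℂ))) := by
    intro Φ hΦ
    induction hΦ using Submodule.span_induction with
    | mem x hx =>
      obtain ⟨m, rfl⟩ := hx
      have e : ∀ θ : ℝ, fourier m (θ : UnitAddCircle) = ee (m * θ) := by
        intro θ
        rw [fourier_coe_apply, ee]
        congr 1
        push_cast
        ring
      simp only [e]
      convert tendsto_exp_DD m hf using 2
      split_ifs with hm
      · simp [hm, ee]
      · rw [integral_ee hm, zero_mul]
    | zero => simp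
    | add x y _ _ hx hy =>
      have e : (∫ θ in (0 : ℝ)..1, (x + y) (θ : UnitAddCircle)) =
          (∫ θ in (0 : ℝ)..1, x (θ : UnitAddCircle)) +
            ∫ θ in (0 : ℝ)..1, y (θ : UnitAddCircle) :=
        intervalIntegral.integral_add (hint x) (hint y)
      rw [e, add_mul]
      refine (hx.add hy).congr' ?_
      filter_upwards [Ioc_mem_nhdsGT zero_lt_one] with δ hδ
      rw [← intervalIntegral.integral_add (intervalIntegrable_mul_DD hf hδ.1 hδ.2 (hint x))
        (intervalIntegrable_mul_DD hf hδ.1 hδ.2 (hint y))]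
      simp only [ContinuousMap.add_apply, add_mul]
    | smul c x _ hx =>
      simp only [ContinuousMap.smul_apply, smul_eq_mul, mul_assoc,
        intervalIntegral.integral_const_mul]
      exact hx.const_mul c
  refine tendsto_DD_approx hf _ (hint Φ) fun η hη => ?_
  have hmem : Φ ∈ closure (Submodule.span ℂ (range (fourier (T := 1))) :
      Set C(UnitAddCircle, ℂ)) := by
    rw [← Submodule.topologicalClosure_coe, span_fourier_closure_eq_top]
    trivial
  obtain ⟨Ψ, h1, h2⟩ := Metric.mem_closure_iff.1 hmem η hη
  rw [dist_eq_norm] at h2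
  refine ⟨_, hint Ψ, ?_, hspan Ψ h1⟩
  have := intervalIntegral.norm_integral_le_of_norm_le_const (a := 0) (b := 1) (C := η)
    (f := fun θ : ℝ => ‖Φ (θ : UnitAddCircle) - Ψ (θ : UnitAddCircle)‖) (fun θ _ => by
      rw [norm_norm]
      exact (ContinuousMap.norm_coe_le_norm (Φ - Ψ) _).trans h2.le)
  rw [sub_zero, abs_one, mul_one] at this
  exact (le_abs_self _).trans this

lemma tendsto_DD_integrable {f : ℝ → ℂ} (hf : Continuous f) {φ : ℝ → ℂ} (hm : Measurable φ)
    (hφ : IntervalIntegrable φ volume 0 1) :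
    Tendsto (fun δ : ℝ => ∫ θ in (0 : ℝ)..1, φ θ * f (δ * DD θ δ)) (𝓝[>] 0)
      (𝓝 ((∫ θ in (0 : ℝ)..1, φ θ) * ∫ t in (0 : ℝ)..1, f t * (hdens t : ℂ))) := by
  refine tendsto_DD_approx hf _ hφ fun η hη => ?_
  set Φ : UnitAddCircle → ℂ := AddCircle.liftIoc 1 0 φ
  have hΦm : Measurable Φ :=
    (hm.comp measurable_subtype_coe).comp (AddCircle.measurableEquivIoc 1 0).measurable
  have hΦ : ∀ θ ∈ Ioc (0 : ℝ) 1, Φ (θ : UnitAddCircle) = φ θ := fun θ hθ =>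
    AddCircle.liftIoc_coe_apply (by rwa [zero_add])
  have hmp := UnitAddCircle.measurePreserving_mk 0
  rw [zero_add] at hmp
  have hΦi : Integrable Φ := by
    rw [← hmp.integrable_comp hΦm.aestronglyMeasurable]
    rw [intervalIntegrable_iff, uIoc_of_le zero_le_one] at hφ
    exact IntegrableOn.congr_fun hφ (fun θ hθ => (hΦ θ hθ).symm) measurableSet_Ioc
  obtain ⟨Ψ, h1, -⟩ := hΦi.exists_boundedContinuous_integral_sub_le hη
  refine ⟨fun θ => Ψ (θ : UnitAddCircle), Continuous.intervalIntegrable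
    (Ψ.continuous.comp (AddCircle.continuous_mk' 1)) _ _, ?_,
    tendsto_DD_circle hf Ψ.toContinuousMap⟩
  refine le_trans (le_of_eq ?_) h1
  rw [← UnitAddCircle.intervalIntegral_preimage 0, zero_add]
  refine intervalIntegral.integral_congr_ae (ae_of_all _ fun θ hθ => ?_)
  rw [uIoc_of_le zero_le_one] at hθ
  simp only
  rw [hΦ θ hθ]

/-- Weak convergence of `δ D(θ, δ)`, with a continuous weight, on a window of values of `θ`. -/
lemma tendsto_DD_window {f W : ℝ → ℝ} (hf : Continuous f) (hW : Continuous W) {a b : ℝ}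
    (ha : 0 ≤ a) (hab : a ≤ b) (hb : b ≤ 1) :
    Tendsto (fun δ : ℝ => ∫ θ in a..b, W θ * f (δ * DD θ δ)) (𝓝[>] 0)
      (𝓝 ((∫ θ in a..b, W θ) * ∫ t in (0 : ℝ)..1, f t * hdens t)) := by
  set φ : ℝ → ℂ := (Ioc a b).indicator fun θ => (W θ : ℂ)
  have hm : Measurable φ :=
    (Complex.measurable_ofReal.comp hW.measurable).indicator measurableSet_Ioc
  have hφ : IntervalIntegrable φ volume 0 1 := by
    rw [intervalIntegrable_iff]
    refine IntegrableOn.indicator ?_ measurableSet_Ioc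
    have : IntervalIntegrable (fun θ => (W θ : ℂ)) volume 0 1 :=
      (Complex.continuous_ofReal.comp hW).intervalIntegrable _ _
    rwa [intervalIntegrable_iff] at this
  have hind : ∀ F : ℝ → ℝ, ∫ θ in (0 : ℝ)..1, φ θ * (F θ : ℂ) =
      ((∫ θ in a..b, W θ * F θ : ℝ) : ℂ) := by
    intro F
    rw [← intervalIntegral.integral_ofReal, intervalIntegral.integral_of_le zero_le_one,
      intervalIntegral.integral_of_le hab]
    have : (fun θ => φ θ * (F θ : ℂ)) = (Ioc a b).indicator fun θ => ((W θ * F θ : ℝ) : ℂ) := by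
      ext θ
      by_cases h : θ ∈ Ioc a b
      · simp [φ, h]
      · simp [φ, h]
    rw [this, setIntegral_indicator measurableSet_Ioc]
    congr 2
    rw [inter_eq_right]
    exact Ioc_subset_Ioc ha hb
  have h := tendsto_DD_integrable (f := fun t => (f t : ℂ)) (by fun_prop) hm hφ
  simp only [hind] at h
  have h1 : ∫ θ in (0 : ℝ)..1, φ θ = ((∫ θ in a..b, W θ : ℝ) : ℂ) := by
    simpa using hind fun _ => 1
  have h2 : ∫ t in (0 : ℝ)..1, (f t : ℂ) * (hdens t : ℂ) =
      ((∫ t in (0 : ℝ)..1, f t * hdens t : ℝ) : ℂ) := by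
    rw [← intervalIntegral.integral_ofReal]
    simp
  rw [h1, h2, ← Complex.ofReal_mul] at h
  exact (Complex.continuous_re.tendsto _).comp h

/-! ### Windows scaled according to the direction -/

/-- The secant of the angle in `(-π/2, π/2)` with tangent `θ`. -/
noncomputable def sec (θ : ℝ) : ℝ := √(1 + θ ^ 2)

lemma continuous_sec : Continuous sec := by unfold sec; fun_prop

lemma one_le_sec (θ : ℝ) : 1 ≤ sec θ := by
  rw [sec, Real.one_le_sqrt]
  nlinarith [sq_nonneg θ]

lemma sec_pos (θ : ℝ) : 0 < sec θ := zero_lt_one.trans_le (one_le_sec θ)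

lemma sec_sq (θ : ℝ) : sec θ ^ 2 = 1 + θ ^ 2 := Real.sq_sqrt (by positivity)

lemma le_sec (θ : ℝ) : θ ≤ sec θ := Real.le_sqrt_of_sq_le (by linarith)

lemma sec_mono {a b : ℝ} (ha : 0 ≤ a) (hab : a ≤ b) : sec a ≤ sec b := by
  unfold sec
  gcongr

lemma sec_le_add {a b : ℝ} (hab : a ≤ b) : sec b ≤ sec a + (b - a) := by
  refine Real.sqrt_le_iff.2 ⟨by linarith [sec_pos a], ?_⟩
  nlinarith [sec_sq a, le_sec a, sec_pos a, mul_nonneg (sub_nonneg.2 hab) (sub_nonneg.2 (le_sec a))]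

lemma sec_le_two {θ : ℝ} (h0 : 0 ≤ θ) (h : θ ≤ 1) : sec θ ≤ 2 := by
  refine Real.sqrt_le_iff.2 ⟨by norm_num, ?_⟩
  nlinarith

/-- The rescaled hitting time `δ D(θ, δ)` for the window `δ = ε sec θ` that scatterers of radius `ε`
cut out on vertical lines along the direction `ω`, where `θ = tan ω`. -/
noncomputable def XX (ε θ : ℝ) : ℝ := ε * sec θ * DD θ (ε * sec θ)

lemma measurable_XX {ε : ℝ} (hε : 0 < ε) : Measurable (XX ε) := by
  have h := measurable_DD (δ := fun θ => ε * sec θ) (continuous_sec.measurable.const_mul ε)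
    fun θ => mul_pos hε (sec_pos θ)
  exact (continuous_sec.measurable.const_mul ε).mul (measurable_from_nat.comp h)

lemma XX_mem {ε θ : ℝ} (hε : 0 < ε) (hε1 : ε ≤ 1 / 2) (h0 : 0 ≤ θ) (h1 : θ ≤ 1) :
    XX ε θ ∈ Icc (0 : ℝ) 1 :=
  DD_mem (mul_pos hε (sec_pos θ)) (by nlinarith [sec_le_two h0 h1]) θ

/-- Upper comparison with the constant window attached to the left end of `[a, b]`. -/
lemma XX_le {ε a b θ : ℝ} (hε : 0 < ε) (hε1 : ε ≤ 1 / 2) (ha : 0 ≤ a) (hb : b ≤ 1)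
    (haθ : a ≤ θ) (hθb : θ ≤ b) :
    XX ε θ ≤ ε * sec a * DD θ (ε * sec a) + (b - a) := by
  have hpa : 0 < ε * sec a := mul_pos hε (sec_pos a)
  have h1 : DD θ (ε * sec θ) ≤ DD θ (ε * sec a) :=
    DD_anti θ hpa (by gcongr; exact sec_mono ha haθ)
  have h2 : (DD θ (ε * sec θ) : ℝ) ≤ DD θ (ε * sec a) := by exact_mod_cast h1
  have h3 := DD_mul_le θ hpa (by nlinarith [sec_le_two ha (by linarith : a ≤ 1)])
  have h4 : sec θ ≤ sec a * (1 + (b - a)) := by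
    nlinarith [sec_le_add haθ, one_le_sec a]
  calc XX ε θ ≤ ε * (sec a * (1 + (b - a))) * DD θ (ε * sec a) := by
        unfold XX
        gcongr
        have := sec_pos a
        have : 0 ≤ 1 + (b - a) := by linarith
        positivity
    _ = ε * sec a * DD θ (ε * sec a) + (DD θ (ε * sec a) * (ε * sec a)) * (b - a) := by ring
    _ ≤ _ := by nlinarith

/-- Lower comparison with the constant window attached to the right end of `[a, b]`. -/
lemma le_XX {ε a b θ : ℝ} (hε : 0 < ε) (hε1 : ε ≤ 1 / 2) (ha : 0 ≤ a) (hb : b ≤ 1)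
    (haθ : a ≤ θ) (hθb : θ ≤ b) :
    ε * sec b * DD θ (ε * sec b) - (b - a) ≤ XX ε θ := by
  have hpb : 0 < ε * sec b := mul_pos hε (sec_pos b)
  have h1 : DD θ (ε * sec b) ≤ DD θ (ε * sec θ) :=
    DD_anti θ (mul_pos hε (sec_pos θ)) (by gcongr; exact sec_mono (by linarith) hθb)
  have h2 : (DD θ (ε * sec b) : ℝ) ≤ DD θ (ε * sec θ) := by exact_mod_cast h1
  have h3 := DD_mul_le θ hpb (by nlinarith [sec_le_two (by linarith : 0 ≤ b) hb])
  have h4 : sec b * (1 - (b - a)) ≤ sec θ := by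
    nlinarith [sec_le_add hθb, one_le_sec b]
  calc _ ≤ ε * (sec b * (1 - (b - a))) * DD θ (ε * sec b) := by
        have : ε * (sec b * (1 - (b - a))) * DD θ (ε * sec b) =
          ε * sec b * DD θ (ε * sec b) - (DD θ (ε * sec b) * (ε * sec b)) * (b - a) := by ring
        rw [this]
        nlinarith
    _ ≤ ε * sec θ * DD θ (ε * sec b) := by gcongr
    _ ≤ XX ε θ := by
        unfold XX
        have := sec_pos θ
        gcongr

/-- The density of `ω` in the variable `θ = tan ω`. -/
noncomputable def WW (θ : ℝ) : ℝ := (1 + θ ^ 2)⁻¹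

lemma continuous_WW : Continuous WW := by
  unfold WW
  exact Continuous.inv₀ (by fun_prop) fun θ => by positivity

lemma WW_nonneg (θ : ℝ) : 0 ≤ WW θ := by unfold WW; positivity

lemma WW_le_one (θ : ℝ) : WW θ ≤ 1 := inv_le_one_of_one_le₀ (by nlinarith [sq_nonneg θ])

lemma integral_WW : ∫ θ in (0 : ℝ)..1, WW θ = π / 4 := by
  simp [WW]

lemma intervalIntegrable_WW_mul {f : ℝ → ℝ} (hf : Continuous f) {Y : ℝ → ℝ} (hY : Measurable Y)
    {a b : ℝ} (hab : a ≤ b) (hmem : ∀ θ ∈ Ioc a b, Y θ ∈ Icc (0 : ℝ) 1) :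
    IntervalIntegrable (fun θ => WW θ * f (Y θ)) volume a b := by
  obtain ⟨C, hC⟩ := (isCompact_Icc (a := (0 : ℝ)) (b := 1)).exists_bound_of_continuousOn
    hf.continuousOn
  have hW := continuous_WW.intervalIntegrable (μ := volume) a b
  rw [intervalIntegrable_iff, uIoc_of_le hab] at hW ⊢
  refine Integrable.mul_bdd (c := C) hW (hf.measurable.comp hY).aestronglyMeasurable ?_
  exact (ae_restrict_mem measurableSet_Ioc).mono fun θ hθ => hC _ (hmem θ hθ)

/-- For monotone Lipschitz `f`, the comparison with constant windows on the cells of a partition of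
mesh `1 / M` costs at most `L / M` on either side. -/
lemma tendsto_XX_mono {f : ℝ → ℝ} (hf : Continuous f) (hmono : Monotone f) {L : ℝ}
    (hL : ∀ x y, x ≤ y → f y ≤ f x + L * (y - x)) :
    Tendsto (fun ε : ℝ => ∫ θ in (0 : ℝ)..1, WW θ * f (XX ε θ)) (𝓝[>] 0)
      (𝓝 (π / 4 * ∫ t in (0 : ℝ)..1, f t * hdens t)) := by
  have hL0 : 0 ≤ L := by
    have h1 := hL 0 1 zero_le_one
    have h2 := hmono zero_le_one
    linarith
  rw [Metric.tendsto_nhds]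
  intro η hη
  obtain ⟨M, hM⟩ := exists_nat_gt (2 * (L + 1) / η)
  have hM0 : (0 : ℝ) < M := lt_of_le_of_lt (by positivity) hM
  have hLM : L / M < η / 2 := by
    rw [div_lt_iff₀ hη] at hM
    rw [div_lt_iff₀ hM0]
    linarith
  set p : ℕ → ℝ := fun i => i / M
  have hp0 : p 0 = 0 := by simp [p]
  have hpM : p M = 1 := by simp [p, hM0.ne']
  have hpn : ∀ i, 0 ≤ p i := fun i => by positivity
  have hps : ∀ i, p (i + 1) - p i = 1 / M := fun i => by simp only [p]; push_cast; ring
  have hpm : ∀ i, p i ≤ p (i + 1) := fun i => by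
    have := hps i
    have : (0 : ℝ) < 1 / M := by positivity
    linarith
  have hp1 : ∀ i < M, p (i + 1) ≤ 1 := fun i hi => by
    simp only [p]
    rw [div_le_one hM0]
    exact_mod_cast hi
  set c := ∫ t in (0 : ℝ)..1, f t * hdens t
  have key : ∀ s : ℕ → ℕ, Tendsto (fun ε : ℝ => ∑ i ∈ Finset.range M,
      ∫ θ in p i..p (i + 1), WW θ * f (ε * sec (p (s i)) * DD θ (ε * sec (p (s i)))))
      (𝓝[>] 0) (𝓝 (π / 4 * c)) := by
    intro s
    have e : π / 4 * c = ∑ i ∈ Finset.range M, (∫ θ in p i..p (i + 1), WW θ) * c := by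
      rw [← Finset.sum_mul, intervalIntegral.sum_integral_adjacent_intervals
        fun i _ => continuous_WW.intervalIntegrable _ _, hp0, hpM, integral_WW]
    rw [e]
    refine tendsto_finsetSum _ fun i hi => ?_
    have ht : Tendsto (fun ε : ℝ => ε * sec (p (s i))) (𝓝[>] 0) (𝓝[>] 0) := by
      refine tendsto_nhdsWithin_iff.2 ⟨((by fun_prop :
        Continuous fun ε : ℝ => ε * sec (p (s i))).tendsto' _ _ (by simp)).mono_left
          nhdsWithin_le_nhds, ?_⟩
      filter_upwards [self_mem_nhdsWithin] with ε hε using mul_pos hε (sec_pos _)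
    exact (tendsto_DD_window hf continuous_WW (hpn i) (hpm i)
      (hp1 i (Finset.mem_range.1 hi))).comp ht
  -- right end points of the cells give lower bounds, left end points upper bounds
  have hlo := Metric.tendsto_nhds.1 (key fun i => i + 1) (η / 2) (by positivity)
  have hup := Metric.tendsto_nhds.1 (key id) (η / 2) (by positivity)
  filter_upwards [hlo, hup, Ioc_mem_nhdsGT (show (0 : ℝ) < 1 / 2 by norm_num)]
    with ε h1 h2 hε
  rw [Real.dist_eq, abs_lt] at h1 h2 ⊢
  have hint : ∀ i ∈ Finset.range M,
      IntervalIntegrable (fun θ => WW θ * f (XX ε θ)) volume (p i) (p (i + 1)) := by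
    intro i hi
    refine intervalIntegrable_WW_mul hf (measurable_XX hε.1) (hpm i) fun θ hθ => ?_
    exact XX_mem hε.1 hε.2 ((hpn i).trans hθ.1.le) (hθ.2.trans (hp1 i (Finset.mem_range.1 hi)))
  have hint2 : ∀ i ∈ Finset.range M, ∀ j ≤ M, IntervalIntegrable
      (fun θ => WW θ * f (ε * sec (p j) * DD θ (ε * sec (p j)))) volume (p i) (p (i + 1)) := by
    intro i hi j hj
    have hpos : 0 < ε * sec (p j) := mul_pos hε.1 (sec_pos _)
    refine intervalIntegrable_WW_mul hf ?_ (hpm i) fun θ hθ => ?_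
    · exact measurable_comp_DD continuous_id hpos
    · refine DD_mem hpos ?_ θ
      have : sec (p j) ≤ 2 := sec_le_two (hpn j) (by
        simp only [p]
        rw [div_le_one hM0]
        exact_mod_cast hj)
      nlinarith [hε.1, hε.2]
  have hsplit : ∫ θ in (0 : ℝ)..1, WW θ * f (XX ε θ) =
      ∑ i ∈ Finset.range M, ∫ θ in p i..p (i + 1), WW θ * f (XX ε θ) := by
    rw [intervalIntegral.sum_integral_adjacent_intervals
      fun i hi => hint i (Finset.mem_range.2 hi), hp0, hpM]
  have hconst : ∑ i ∈ Finset.range M, ∫ θ in p i..p (i + 1), L / M = L / M := by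
    rw [intervalIntegral.sum_integral_adjacent_intervals
      fun i hi => intervalIntegrable_const, hp0, hpM]
    simp
  have hA : ∑ i ∈ Finset.range M, ∫ θ in p i..p (i + 1), WW θ * f (XX ε θ) ≤
      ∑ i ∈ Finset.range M, (∫ θ in p i..p (i + 1),
        WW θ * f (ε * sec (p i) * DD θ (ε * sec (p i)))) + L / M := by
    refine le_of_le_of_eq ?_ (congrArg _ hconst)
    rw [← Finset.sum_add_distrib]
    refine Finset.sum_le_sum fun i hi => ?_
    have hi' := Finset.mem_range.1 hi
    rw [← intervalIntegral.integral_add (hint2 i hi i hi'.le) intervalIntegrable_const]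
    refine intervalIntegral.integral_mono_on (hpm i) (hint i hi)
      ((hint2 i hi i hi'.le).add intervalIntegrable_const) fun θ hθ => ?_
    have hx := XX_le hε.1 hε.2 (hpn i) (hp1 i hi') hθ.1 hθ.2
    rw [hps i] at hx
    have h3 := (hmono hx).trans (hL _ _ (le_add_of_nonneg_right (by positivity)))
    rw [add_sub_cancel_left, mul_one_div] at h3
    have h4 := mul_le_mul_of_nonneg_left h3 (WW_nonneg θ)
    have h5 : WW θ * (L / M) ≤ L / M :=
      mul_le_of_le_one_left (by positivity) (WW_le_one θ)
    linarith
  have hB : ∑ i ∈ Finset.range M, (∫ θ in p i..p (i + 1),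
        WW θ * f (ε * sec (p (i + 1)) * DD θ (ε * sec (p (i + 1))))) ≤
      ∑ i ∈ Finset.range M, (∫ θ in p i..p (i + 1), WW θ * f (XX ε θ)) + L / M := by
    refine le_of_le_of_eq ?_ (congrArg _ hconst)
    rw [← Finset.sum_add_distrib]
    refine Finset.sum_le_sum fun i hi => ?_
    have hi' := Finset.mem_range.1 hi
    rw [← intervalIntegral.integral_add (hint i hi) intervalIntegrable_const]
    refine intervalIntegral.integral_mono_on (hpm i) (hint2 i hi (i + 1) hi')
      ((hint i hi).add intervalIntegrable_const) fun θ hθ => ?_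
    have hx := le_XX hε.1 hε.2 (hpn i) (hp1 i hi') hθ.1 hθ.2
    rw [hps i, sub_le_iff_le_add] at hx
    have h3 := (hmono hx).trans (hL _ _ (le_add_of_nonneg_right (by positivity)))
    rw [add_sub_cancel_left, mul_one_div] at h3
    have h4 := mul_le_mul_of_nonneg_left h3 (WW_nonneg θ)
    have h5 : WW θ * (L / M) ≤ L / M :=
      mul_le_of_le_one_left (by positivity) (WW_le_one θ)
    linarith
  simp only [id] at h2
  rw [hsplit]
  constructor <;> linarith

lemma intervalIntegrable_XX {f : ℝ → ℝ} (hf : Continuous f) {ε : ℝ} (hε : 0 < ε)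
    (hε1 : ε ≤ 1 / 2) : IntervalIntegrable (fun θ => WW θ * f (XX ε θ)) volume 0 1 :=
  intervalIntegrable_WW_mul hf (measurable_XX hε) zero_le_one fun _ hθ =>
    XX_mem hε hε1 hθ.1.le hθ.2

lemma intervalIntegrable_hdens {f : ℝ → ℝ} (hf : Continuous f) :
    IntervalIntegrable (fun t => f t * hdens t) volume 0 1 := by
  have h := integrable_mul_hdens (f := fun t => (f t : ℂ)) (by fun_prop)
  rw [intervalIntegrable_iff] at h ⊢
  have h2 : Integrable _ _ := h.re
  simpa [IntegrableOn] using h2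

/-- A `K`-Lipschitz function is the difference of the monotone functions `f t + K t` and `K t`. -/
lemma tendsto_XX_lipschitz {f : ℝ → ℝ} {K : NNReal} (hf : LipschitzWith K f) :
    Tendsto (fun ε : ℝ => ∫ θ in (0 : ℝ)..1, WW θ * f (XX ε θ)) (𝓝[>] 0)
      (𝓝 (π / 4 * ∫ t in (0 : ℝ)..1, f t * hdens t)) := by
  have hfc := hf.continuous
  have hK : ∀ x y, x ≤ y → |f y - f x| ≤ K * (y - x) := fun x y hxy => by
    have := hf.dist_le_mul y x
    rwa [Real.dist_eq, Real.dist_eq, abs_of_nonneg (sub_nonneg.2 hxy)] at this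
  have hgc : Continuous fun t => f t + K * t := by fun_prop
  have hlc : Continuous fun t : ℝ => (K : ℝ) * t := by fun_prop
  have h1 := tendsto_XX_mono (f := fun t => f t + K * t) hgc
    (fun x y hxy => by
      have := (abs_le.1 (hK x y hxy)).1
      simp only
      linarith) (L := 2 * K) fun x y hxy => by
        have := (abs_le.1 (hK x y hxy)).2
        linarith
  have h2 := tendsto_XX_mono (f := fun t => K * t) hlc
    (fun x y hxy => by simp only; gcongr) (L := K) fun x y hxy => by linarith
  have h3 := h1.sub h2
  rw [← mul_sub, ← intervalIntegral.integral_sub (intervalIntegrable_hdens hgc)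
    (intervalIntegrable_hdens hlc)] at h3
  simp only [← sub_mul, add_sub_cancel_right] at h3
  refine h3.congr' ?_
  filter_upwards [Ioc_mem_nhdsGT (show (0 : ℝ) < 1 / 2 by norm_num)] with ε hε
  rw [← intervalIntegral.integral_sub (intervalIntegrable_XX hgc hε.1 hε.2)
    (intervalIntegrable_XX hlc hε.1 hε.2)]
  simp only [← mul_sub, add_sub_cancel_right]

/-- Weak convergence of the hitting times with the window scaled according to the direction;
polynomials, being Lipschitz on `[0, 1]`, approximate `f` there. -/
lemma tendsto_XX {f : ℝ → ℝ} (hf : Continuous f) :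
    Tendsto (fun ε : ℝ => ∫ θ in (0 : ℝ)..1, WW θ * f (XX ε θ)) (𝓝[>] 0)
      (𝓝 (π / 4 * ∫ t in (0 : ℝ)..1, f t * hdens t)) := by
  refine tendsto_of_approx fun η hη => ?_
  obtain ⟨P, hP⟩ := exists_polynomial_near_of_continuousOn 0 1 f hf.continuousOn (η / 2)
    (by positivity)
  have hPc : ContDiff ℝ 1 fun x : ℝ => P.eval x := by
    simp only [← Polynomial.coe_aeval_eq_eval]
    exact P.contDiff_aeval 1
  have hPl : ∃ K, LipschitzOnWith K (fun x => P.eval x) (Icc (0 : ℝ) 1) :=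
    LocallyLipschitzOn.exists_lipschitzOnWith_of_compact isCompact_Icc
      hPc.locallyLipschitz.locallyLipschitzOn
  obtain ⟨K, hK⟩ := hPl
  obtain ⟨g, hg, hgP⟩ := hK.extend_real
  have hgf : ∀ t ∈ Icc (0 : ℝ) 1, |f t - g t| ≤ η / 2 := fun t ht => by
    rw [← hgP ht, abs_sub_comm]
    exact (hP t ht).le
  refine ⟨_, _, tendsto_XX_lipschitz hg, ?_, ?_⟩
  · rw [← mul_sub, ← intervalIntegral.integral_sub (intervalIntegrable_hdens hg.continuous)
      (intervalIntegrable_hdens hf), norm_mul]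
    have h1 : ‖∫ t in (0 : ℝ)..1, (g t * hdens t - f t * hdens t)‖ ≤ η := by
      have := intervalIntegral.norm_integral_le_of_norm_le_const (a := 0) (b := 1) (C := η)
        (f := fun t => g t * hdens t - f t * hdens t) fun t ht => by
          rw [uIoc_of_le zero_le_one] at ht
          have h2 := hdens_mem ht.1
          have h3 := hgf t ⟨ht.1.le, ht.2⟩
          rw [← sub_mul, norm_mul, Real.norm_eq_abs, Real.norm_eq_abs, abs_sub_comm,
            abs_of_nonneg h2.1]
          nlinarith [h2.1, h2.2, abs_nonneg (f t - g t)]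
      simpa using this
    have h2 : ‖π / 4‖ ≤ 1 := by
      rw [Real.norm_of_nonneg (by positivity)]
      linarith [Real.pi_le_four]
    nlinarith [norm_nonneg (π / 4), norm_nonneg (∫ t in (0 : ℝ)..1, (g t * hdens t - f t * hdens t))]
  · filter_upwards [Ioc_mem_nhdsGT (show (0 : ℝ) < 1 / 2 by norm_num)] with ε hε
    rw [← intervalIntegral.integral_sub (intervalIntegrable_XX hf hε.1 hε.2)
      (intervalIntegrable_XX hg.continuous hε.1 hε.2)]
    have := intervalIntegral.norm_integral_le_of_norm_le_const (a := 0) (b := 1) (C := η)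
      (f := fun θ => WW θ * f (XX ε θ) - WW θ * g (XX ε θ)) fun t ht => by
        rw [uIoc_of_le zero_le_one] at ht
        have h3 := hgf _ (XX_mem hε.1 hε.2 ht.1.le ht.2)
        rw [← mul_sub, norm_mul, Real.norm_eq_abs, Real.norm_eq_abs, abs_of_nonneg (WW_nonneg t)]
        nlinarith [WW_nonneg t, WW_le_one t, abs_nonneg (f (XX ε t) - g (XX ε t))]
    simpa using this

/-! ### The free path -/

/-- The times at which the ray in direction `ω` is within `ε` of a nonzero lattice point. -/
def hits (ε ω : ℝ) : Set ℝ :=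
  {τ : ℝ | 0 < τ ∧ ∃ p : ℤ × ℤ, p ≠ (0, 0) ∧
    √((τ * Real.cos ω - p.1) ^ 2 + (τ * Real.sin ω - p.2) ^ 2) ≤ ε}

lemma freePath_eq (ε ω : ℝ) : freePath ε ω = sInf (hits ε ω) := rfl

lemma hits_bddBelow (ε ω : ℝ) : BddBelow (hits ε ω) := ⟨0, fun _ h => h.1.le⟩

lemma freePath_nonneg (ε ω : ℝ) : 0 ≤ freePath ε ω := Real.sInf_nonneg fun _ h => h.1.le

lemma hits_neg (ε ω : ℝ) : hits ε (-ω) = hits ε ω := by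
  have key : ∀ ω, hits ε ω ⊆ hits ε (-ω) := by
    rintro ω τ ⟨h0, p, hp, h⟩
    refine ⟨h0, (p.1, -p.2), fun h => hp ?_, ?_⟩
    · rw [Prod.mk.injEq, neg_eq_zero] at h
      exact Prod.ext h.1 h.2
    · convert h using 2
      rw [Real.cos_neg, Real.sin_neg]
      push_cast
      ring
  refine Subset.antisymm ?_ (key ω)
  simpa using key (-ω)

lemma hits_swap (ε ω : ℝ) : hits ε (π / 2 - ω) = hits ε ω := by
  have key : ∀ ω, hits ε ω ⊆ hits ε (π / 2 - ω) := by
    rintro ω τ ⟨h0, p, hp, h⟩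
    refine ⟨h0, (p.2, p.1), fun h => hp ?_, ?_⟩
    · rw [Prod.mk.injEq] at h
      exact Prod.ext h.2 h.1
    · convert h using 2
      rw [Real.cos_pi_div_two_sub, Real.sin_pi_div_two_sub]
      ring
  refine Subset.antisymm ?_ (key ω)
  simpa using key (π / 2 - ω)

lemma freePath_neg (ε ω : ℝ) : freePath ε (-ω) = freePath ε ω := by
  rw [freePath_eq, hits_neg, freePath_eq]

lemma freePath_swap (ε ω : ℝ) : freePath ε (π / 2 - ω) = freePath ε ω := by
  rw [freePath_eq, hits_swap, freePath_eq]

lemma freePath_periodic (ε : ℝ) : Function.Periodic (freePath ε) (π / 2) := fun ω => by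
  rw [← freePath_swap, ← freePath_neg]
  congr 1
  ring

/-- The set is a countable union of projections, along compact intervals of times, of closed sets. -/
lemma measurableSet_exists_hit (ε q : ℝ) : MeasurableSet {ω | ∃ τ ∈ hits ε ω, τ < q} := by
  have e : {ω | ∃ τ ∈ hits ε ω, τ < q} = ⋃ (p : {p : ℤ × ℤ // p ≠ (0, 0)}) (n : ℕ),
      (Prod.snd : Icc (1 / ((n : ℝ) + 1)) (q - 1 / ((n : ℝ) + 1)) × ℝ → ℝ) ''
        {x | √(((x.1 : ℝ) * Real.cos x.2 - p.1.1) ^ 2 +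
          ((x.1 : ℝ) * Real.sin x.2 - p.1.2) ^ 2) ≤ ε} := by
    ext ω
    simp only [mem_ofPred_eq, mem_iUnion, mem_image]
    constructor
    · rintro ⟨τ, ⟨h0, p, hp, h⟩, hq⟩
      obtain ⟨n, hn⟩ := exists_nat_one_div_lt (lt_min h0 (sub_pos.2 hq))
      rw [lt_min_iff] at hn
      exact ⟨⟨p, hp⟩, n, (⟨τ, hn.1.le, by linarith [hn.2]⟩, ω), h, rfl⟩
    · rintro ⟨p, n, ⟨τ, ω'⟩, h, rfl⟩
      have hn : (0 : ℝ) < 1 / ((n : ℝ) + 1) := by positivity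
      exact ⟨τ, ⟨hn.trans_le τ.2.1, p.1, p.2, h⟩, by linarith [τ.2.2]⟩
  rw [e]
  refine MeasurableSet.iUnion fun p => MeasurableSet.iUnion fun n => IsClosed.measurableSet ?_
  exact isClosedMap_snd_of_compactSpace _ (isClosed_le (by fun_prop) continuous_const)

lemma measurable_freePath (ε : ℝ) : Measurable (freePath ε) := by
  refine measurable_of_Iio fun q => ?_
  have e : freePath ε ⁻¹' Iio q = {ω | ∃ τ ∈ hits ε ω, τ < q} ∪
      ((⋃ n : ℕ, {ω | ∃ τ ∈ hits ε ω, τ < n})ᶜ ∩ {_ω | 0 < q}) := by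
    ext ω
    simp only [mem_preimage, mem_Iio, mem_union, mem_inter_iff, mem_compl_iff, mem_iUnion,
      mem_ofPred_eq]
    rcases (hits ε ω).eq_empty_or_nonempty with h | h
    -- directions that never meet a scatterer have free path `sInf ∅ = 0`
    · rw [freePath_eq, h]
      simp
    · rw [freePath_eq, csInf_lt_iff (hits_bddBelow ε ω) h]
      obtain ⟨τ, hτ⟩ := h
      obtain ⟨n, hn⟩ := exists_nat_gt τ
      refine ⟨Or.inl, ?_⟩
      rintro (h | h)
      · exact h
      · exact absurd ⟨n, τ, hτ, hn⟩ h.1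
  rw [e]
  exact (measurableSet_exists_hit ε q).union
    ((MeasurableSet.iUnion fun n : ℕ => measurableSet_exists_hit ε (n : ℝ)).compl.inter
      (MeasurableSet.const _))

/-- In the first octant the free path is within `2 ε` of the distance along the ray to the vertical
line `x = D`, with `D` the least positive abscissa of a lattice point whose scatterer meets the ray. -/
lemma abs_freePath_sub_le {ε θ : ℝ} (hε : 0 < ε) (hε1 : ε < 1 / 2) (h0 : 0 ≤ θ) (h1 : θ ≤ 1) :
    |freePath ε (arctan θ) - sec θ * DD θ (ε * sec θ)| ≤ 2 * ε := by
  have hσ := sec_pos θ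
  have hσ2 := sec_le_two h0 h1
  have hc : Real.cos (arctan θ) = 1 / sec θ := Real.cos_arctan θ
  have hs : Real.sin (arctan θ) = θ / sec θ := Real.sin_arctan θ
  set c := Real.cos (arctan θ)
  set s := Real.sin (arctan θ)
  have hcs : s ^ 2 + c ^ 2 = 1 := Real.sin_sq_add_cos_sq _
  have hc0 : 0 < c := by rw [hc]; positivity
  have hc1 : 1 / 2 ≤ c := by
    rw [hc]
    gcongr
  have hsc : s = θ * c := by rw [hs, hc]; ring
  have hσc : sec θ * c = 1 := by rw [hc]; field_simp
  have hs0 : 0 ≤ s := by rw [hsc]; positivity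
  have hs1 : s ≤ 1 := by nlinarith
  have hsc1 : s ≤ c := by rw [hsc]; nlinarith
  have hδ : 0 < ε * sec θ := by positivity
  obtain ⟨hD1, b, hb⟩ := DD_spec θ hδ
  set D := DD θ (ε * sec θ) with hD
  have hD1' : (1 : ℝ) ≤ D := by exact_mod_cast hD1
  -- the perpendicular offset of `(D, b)` from the ray
  have hperp : |(D : ℝ) * s - b * c| ≤ ε := by
    have : (D : ℝ) * s - b * c = (D * θ - b) * c := by rw [hsc]; ring
    rw [this, abs_mul, abs_of_pos hc0]
    calc _ ≤ ε * sec θ * c := by gcongr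
      _ = ε := by rw [mul_assoc, hσc, mul_one]
  set u := (D : ℝ) * s - b * c with hu
  have hu' := abs_le.1 hperp
  -- the foot of the perpendicular from `(D, b)` is a hitting time
  have hℓ : (D : ℝ) * c + b * s = sec θ * D - u * θ := by
    have e : ((D : ℝ) * c + b * s) * c = D - u * s := by
      rw [hu]
      linear_combination (D : ℝ) * hcs
    have : (D : ℝ) * c + b * s = sec θ * (((D : ℝ) * c + b * s) * c) := by
      linear_combination (-(D : ℝ) * c - b * s) * hσc
    rw [this, e, hsc]
    linear_combination (-u * θ) * hσc
  have huθ : |u * θ| ≤ ε := by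
    rw [abs_mul, abs_of_nonneg h0]
    exact (mul_le_of_le_one_right (abs_nonneg u) h1).trans hperp
  have huθ' := abs_le.1 huθ
  have hmem : (D : ℝ) * c + b * s ∈ hits ε (arctan θ) := by
    refine ⟨?_, ((D : ℤ), b), ?_, ?_⟩
    · rw [hℓ]
      have h5 : 1 * 1 ≤ sec θ * (D : ℝ) := by gcongr; exact one_le_sec θ
      linarith [huθ'.2]
    · intro h
      rw [Prod.mk.injEq] at h
      have := h.1
      omega
    · refine Real.sqrt_le_iff.2 ⟨hε.le, ?_⟩
      have e : (((D : ℝ) * c + b * s) * c - ((D : ℤ) : ℝ)) ^ 2 +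
          (((D : ℝ) * c + b * s) * s - b) ^ 2 = u ^ 2 := by
        have e1 : ((D : ℝ) * c + b * s) * c - ((D : ℤ) : ℝ) = - s * u := by
          push_cast
          rw [hu]
          linear_combination (D : ℝ) * hcs
        have e2 : ((D : ℝ) * c + b * s) * s - b = c * u := by
          rw [hu]
          linear_combination (b : ℝ) * hcs
        rw [e1, e2]
        linear_combination u ^ 2 * hcs
      rw [e]
      exact sq_le_sq' hu'.1 hu'.2
  rw [abs_le]
  constructor
  · have hlow : sec θ * D - 2 * ε ≤ freePath ε (arctan θ) := by
      rw [freePath_eq]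
      refine le_csInf ⟨_, hmem⟩ ?_
      rintro τ ⟨hτ, ⟨x, y⟩, hp, h⟩
      change √((τ * c - x) ^ 2 + (τ * s - y) ^ 2) ≤ ε at h
      rw [Real.sqrt_le_iff] at h
      have hA := h.2
      have hx : |τ * c - x| ≤ ε := abs_le_of_sq_le_sq (by linarith [sq_nonneg (τ * s - y)]) hε.le
      have hxy : |x * s - y * c| ≤ ε := by
        refine abs_le_of_sq_le_sq (le_trans ?_ hA) hε.le
        have e : ((x : ℝ) * s - y * c) ^ 2 + ((τ * c - x) * c + (τ * s - y) * s) ^ 2 =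
            (τ * c - x) ^ 2 + (τ * s - y) ^ 2 := by
          have : (x : ℝ) * s - y * c = -(τ * c - x) * s + (τ * s - y) * c := by ring
          rw [this]
          linear_combination ((τ * c - x) ^ 2 + (τ * s - y) ^ 2) * hcs
        linarith [sq_nonneg ((τ * c - x) * c + (τ * s - y) * s)]
      have hx' := abs_le.1 hx
      have hx0 : 0 ≤ x := by
        have : (-1 : ℝ) < x := by linarith [mul_pos hτ hc0, hx'.2]
        have : (-1 : ℤ) < x := by exact_mod_cast this
        omega
      have hx1 : x ≠ 0 := by
        rintro rfl
        have hy : y ≠ 0 := fun hy => hp (by rw [hy])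
        have hy1 : (1 : ℝ) ≤ |(y : ℝ)| := by exact_mod_cast Int.one_le_abs hy
        rw [Int.cast_zero, zero_mul, zero_sub, abs_neg, abs_mul, abs_of_pos hc0] at hxy
        have := le_mul_of_one_le_left hc0.le hy1
        linarith
      lift x to ℕ using hx0
      have hx2 : 1 ≤ x := by
        have : x ≠ 0 := by exact_mod_cast hx1
        omega
      have hDx : D ≤ x := by
        refine DD_le (b := y) hx2 ?_
        have e : (x : ℝ) * θ - y = sec θ * (x * s - y * c) := by
          rw [hsc]
          linear_combination (-(x : ℝ) * θ + y) * hσc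
        rw [e, abs_mul, abs_of_pos hσ, mul_comm]
        have hxy' : |(x : ℝ) * s - y * c| ≤ ε := by exact_mod_cast hxy
        gcongr
      have hDx' : (D : ℝ) ≤ x := by exact_mod_cast hDx
      have hx3 : (x : ℝ) ≤ τ * c + ε := by
        have := hx'.1
        push_cast at this
        linarith
      have : τ = sec θ * (τ * c) := by linear_combination (-τ) * hσc
      rw [this]
      have h5 : sec θ * (D : ℝ) ≤ sec θ * (τ * c + ε) := by gcongr; exact hDx'.trans hx3
      have h6 : sec θ * ε ≤ 2 * ε := by gcongr
      linarith
    linarith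
  · have hup : freePath ε (arctan θ) ≤ _ := csInf_le (hits_bddBelow _ _) hmem
    rw [hℓ] at hup
    linarith

/-- The substitution `θ = tan ω`. -/
lemma integral_octant (g : ℝ → ℝ) :
    ∫ ω in (0 : ℝ)..π / 4, g ω = ∫ θ in (0 : ℝ)..1, WW θ * g (arctan θ) := by
  have him : arctan '' Ioc 0 1 = Ioc 0 (π / 4) := by
    ext ω
    constructor
    · rintro ⟨θ, h, rfl⟩
      refine ⟨by simpa using Real.arctan_strictMono h.1, ?_⟩
      rw [← Real.arctan_one]
      exact Real.arctan_strictMono.monotone h.2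
    · intro h
      have h1 : -(π / 2) < ω := by linarith [Real.pi_pos, h.1]
      have h2 : ω < π / 2 := by linarith [Real.pi_pos, h.2]
      have h3 := Real.arctan_tan h1 h2
      refine ⟨Real.tan ω, ⟨Real.tan_pos_of_pos_of_lt_pi_div_two h.1 h2, ?_⟩, h3⟩
      rw [← Real.arctan_strictMono.le_iff_le, h3, Real.arctan_one]
      exact h.2
  rw [intervalIntegral.integral_of_le (by positivity),
    intervalIntegral.integral_of_le zero_le_one, ← him,
    integral_image_eq_integral_abs_deriv_smul measurableSet_Ioc
      (fun θ _ => (Real.hasDerivAt_arctan' θ).hasDerivWithinAt) Real.arctan_injective.injOn]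
  refine setIntegral_congr_fun measurableSet_Ioc fun θ _ => ?_
  change |WW θ| • _ = _
  rw [abs_of_nonneg (WW_nonneg θ), smul_eq_mul]

lemma integral_hdens (f : ℝ → ℝ) :
    ∫ t in Ioi (0 : ℝ), f t * hdens t = ∫ t in (0 : ℝ)..1, f t * hdens t := by
  rw [intervalIntegral.integral_of_le zero_le_one]
  refine setIntegral_eq_of_subset_of_forall_sdiff_eq_zero measurableSet_Ioi
    (fun t ht => ht.1) fun t ht => ?_
  have h1 : 1 < t := by
    by_contra h
    exact ht.2 ⟨ht.1, not_lt.1 h⟩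
  rw [hdens, if_neg (by linarith), if_neg (by linarith), mul_zero]

lemma intervalIntegrable_freePath {f : ℝ → ℝ} (hf : Continuous f) (hsupp : HasCompactSupport f)
    (ε a b : ℝ) : IntervalIntegrable (fun ω => f (ε * freePath ε ω)) volume a b := by
  obtain ⟨C, hC⟩ := hsupp.exists_bound_of_continuous hf
  have h1 : IntervalIntegrable (fun _ : ℝ => (1 : ℝ)) volume a b := intervalIntegrable_const
  rw [intervalIntegrable_iff] at h1 ⊢
  have := Integrable.mul_bdd (c := C) h1
    (hf.measurable.comp ((measurable_freePath ε).const_mul ε)).aestronglyMeasurable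
    (ae_of_all _ fun ω => hC _)
  simpa [IntegrableOn] using this

/-- Eightfold symmetry of the square lattice. -/
lemma integral_circle {f : ℝ → ℝ} (hf : Continuous f) (hsupp : HasCompactSupport f) (ε : ℝ) :
    ∫ ω in (0 : ℝ)..2 * π, f (ε * freePath ε ω) =
      8 * ∫ ω in (0 : ℝ)..π / 4, f (ε * freePath ε ω) := by
  have hI := intervalIntegrable_freePath hf hsupp ε
  have hper : Function.Periodic (fun ω => f (ε * freePath ε ω)) (π / 2) := fun ω => by
    simp only
    rw [freePath_periodic]
  have h1 := hper.intervalIntegral_add_zsmul_eq 4 0 hI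
  have h2 : ∫ ω in π / 4..π / 2, f (ε * freePath ε ω) =
      ∫ ω in (0 : ℝ)..π / 4, f (ε * freePath ε ω) := by
    have := intervalIntegral.integral_comp_sub_left (a := 0) (b := π / 4)
      (fun ω => f (ε * freePath ε ω)) (π / 2)
    simp only [freePath_swap] at this
    rw [this]
    congr 1 <;> ring
  have h3 := intervalIntegral.integral_add_adjacent_intervals (hI 0 (π / 4)) (hI (π / 4) (π / 2))
  rw [h2] at h3
  rw [zero_add, zero_add, ← h3] at h1
  have e : (2 : ℝ) * π = (4 : ℤ) • (π / 2) := by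
    rw [zsmul_eq_mul]
    push_cast
    ring
  rw [e, h1, zsmul_eq_mul]
  push_cast
  ring

/-- Uniform continuity of `f` absorbs the error `2 ε²` between `ε` times the free path and `XX ε θ`. -/
lemma tendsto_octant {f : ℝ → ℝ} (hf : Continuous f) (hsupp : HasCompactSupport f) :
    Tendsto (fun ε : ℝ => ∫ ω in (0 : ℝ)..π / 4, f (ε * freePath ε ω)) (𝓝[>] 0)
      (𝓝 (π / 4 * ∫ t in (0 : ℝ)..1, f t * hdens t)) := by
  refine tendsto_of_approx fun η hη => ⟨_, _, tendsto_XX hf, by simpa using hη.le, ?_⟩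
  obtain ⟨ρ, hρ, hu⟩ := Metric.uniformContinuous_iff.1
    (hsupp.uniformContinuous_of_continuous hf) η hη
  filter_upwards [Ioo_mem_nhdsGT (show (0 : ℝ) < min (1 / 2) ρ by positivity)] with ε hε
  have hε1 : ε < 1 / 2 := hε.2.trans_le (min_le_left _ _)
  have hε2 : ε < ρ := hε.2.trans_le (min_le_right _ _)
  obtain ⟨C, hC⟩ := hsupp.exists_bound_of_continuous hf
  have hint : IntervalIntegrable (fun θ => WW θ * f (ε * freePath ε (arctan θ))) volume 0 1 := by
    have hW := continuous_WW.intervalIntegrable (μ := volume) 0 1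
    rw [intervalIntegrable_iff] at hW ⊢
    exact Integrable.mul_bdd (c := C) hW (hf.measurable.comp
      (((measurable_freePath ε).comp Real.continuous_arctan.measurable).const_mul
        ε)).aestronglyMeasurable (ae_of_all _ fun ω => hC _)
  rw [integral_octant fun ω => f (ε * freePath ε ω),
    ← intervalIntegral.integral_sub hint (intervalIntegrable_XX hf hε.1 hε1.le)]
  have := intervalIntegral.norm_integral_le_of_norm_le_const (a := 0) (b := 1) (C := η)
    (f := fun θ => WW θ * f (ε * freePath ε (arctan θ)) - WW θ * f (XX ε θ)) fun t ht => by
      rw [uIoc_of_le zero_le_one] at ht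
      have h3 : dist (ε * freePath ε (arctan t)) (XX ε t) < ρ := by
        have e : ε * freePath ε (arctan t) - XX ε t =
            ε * (freePath ε (arctan t) - sec t * DD t (ε * sec t)) := by
          unfold XX
          ring
        rw [Real.dist_eq, e, abs_mul, abs_of_pos hε.1]
        have := abs_freePath_sub_le hε.1 hε1 ht.1.le ht.2
        nlinarith [hε.1]
      have h4 := (hu h3).le
      rw [Real.dist_eq] at h4
      rw [← mul_sub, norm_mul, Real.norm_eq_abs, Real.norm_eq_abs, abs_of_nonneg (WW_nonneg t)]
      nlinarith [WW_nonneg t, WW_le_one t,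
        abs_nonneg (f (ε * freePath ε (arctan t)) - f (XX ε t))]
  simpa using this

end FreePath

theorem statement1 (f : ℝ → ℝ) (hf : Continuous f) (hsupp : HasCompactSupport f) :
    Tendsto (fun ε : ℝ => (1 / (2 * Real.pi)) * ∫ ω in (0 : ℝ)..(2 * Real.pi),
        f (ε * freePath ε ω))
      (𝓝[>] 0) (𝓝 (∫ t in Set.Ioi (0 : ℝ), f t * hdens t)) := by
  have h := (FreePath.tendsto_octant hf hsupp).const_mul (1 / (2 * π) * 8)
  have e : 1 / (2 * π) * 8 * (π / 4 * ∫ t in (0 : ℝ)..1, f t * hdens t) =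
      ∫ t in Ioi (0 : ℝ), f t * hdens t := by
    rw [FreePath.integral_hdens]
    field_simp
    ring
  rw [e] at h
  refine h.congr fun ε => ?_
  rw [FreePath.integral_circle hf hsupp, mul_assoc]
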